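/- arXiv:2503.01247 — 5 statements merged into one kernel-verified Lean document; each statement's English description precedes it below -/
import Mathlib

section
/- For all σ-structures A and B and every k ∈ ℕ, there exists a pathwise embedding F_k^I(A) → F_k^I(B) in EM(E_k^I) if, and only if, Duplicator has a winning strategy in the k-round existential Ehrenfeucht–Fraïssé game from A to B. -/
/-- A relational vocabulary: a type of relation symbols together with their arities. -/
structure Vocab : Type 1 where
  Rel : Type
  ar : Rel → ℕ

/-- A structure for the relational vocabulary `V` with carrier `α`. -/
structure Str (V : Vocab) (α : Type) : Type where
  rel : ∀ r : V.Rel, (Fin (V.ar r) → α) → Prop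
/-- The relation formed by a list of pairs of chosen elements is a partial isomorphism
between `A` and `B`: the assignment is functional and injective, and it preserves and
reflects the interpretations of all relation symbols. -/
def IsPartialIso {V : Vocab} {α β : Type} (A : Str V α) (B : Str V β)
    (h : List (α × β)) : Prop :=
  (∀ i j : Fin h.length, ((h.get i).1 = (h.get j).1 ↔ (h.get i).2 = (h.get j).2)) ∧
  (∀ (r : V.Rel) (v : Fin (V.ar r) → Fin h.length),
    A.rel r (fun t => (h.get (v t)).1) ↔ B.rel r (fun t => (h.get (v t)).2))

/-- `EFWin A B n h` : Duplicator has a winning strategy in the remaining `n` rounds of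
the existential Ehrenfeucht–Fraïssé game from `A` to `B`, where `h` records the pairs of
elements chosen so far.  In each round Spoiler chooses an element of `A` and Duplicator
responds with an element of `B`; at the end the chosen pairs must form a partial
isomorphism. -/
def EFWin {V : Vocab} {α β : Type} (A : Str V α) (B : Str V β) :
    ℕ → List (α × β) → Prop
  | 0, h => IsPartialIso A B h
  | n + 1, h => ∀ a : α, ∃ b : β, EFWin A B n (h ++ [(a, b)])
/-- An object datum for the Eilenberg–Moore category `EM(E_k^I)` of the
Ehrenfeucht–Fraïssé comonad over `σ^I = σ ∪ {I}`: a `σ`-structure together with an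
interpretation `ieq` of the fresh binary relation symbol `I` and a (forest) order. -/
structure EObj (V : Vocab) : Type 1 where
  carrier : Type
  rel : ∀ r : V.Rel, (Fin (V.ar r) → carrier) → Prop
  ieq : carrier → carrier → Prop
  le : carrier → carrier → Prop

namespace EObj

variable {V : Vocab}

/-- Gaifman adjacency, with respect to all relations of `σ ∪ {I}`. -/
def Adj (X : EObj V) (x y : X.carrier) : Prop :=
  x ≠ y ∧ ((∃ r v, X.rel r v ∧ (∃ i, v i = x) ∧ (∃ j, v j = y)) ∨ X.ieq x y ∨ X.ieq y x)

/-- The covering relation of the order of `X`. -/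
def Cover (X : EObj V) (x y : X.carrier) : Prop :=
  X.le x y ∧ x ≠ y ∧ ∀ z, X.le x z → X.le z y → z = x ∨ z = y

/-- Roots, i.e. minimal elements of the forest order. -/
def IsRoot (X : EObj V) (x : X.carrier) : Prop := ∀ y, X.le y x → y = x

/-- `X` is (the datum of) a coalgebra for `E_k^I`: a forest-ordered `σ^I`-structure of
height at most `k` in which Gaifman-adjacent elements are comparable. -/
def IsCoalg (k : ℕ) (X : EObj V) : Prop :=
  (∀ x, X.le x x) ∧ (∀ x y z, X.le x y → X.le y z → X.le x z) ∧
  (∀ x y, X.le x y → X.le y x → x = y) ∧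
  (∀ x : X.carrier, {y | X.le y x}.Finite ∧ {y | X.le y x}.ncard ≤ k + 1 ∧
    ∀ y z, X.le y x → X.le z x → X.le y z ∨ X.le z y) ∧
  (∀ x y, X.Adj x y → X.le x y ∨ X.le y x)

/-- Morphisms of `EM(E_k^I)`: homomorphisms of `σ^I`-structures that are also forest
morphisms (they send roots to roots and preserve the covering relation). -/
def IsHom (X Y : EObj V) (f : X.carrier → Y.carrier) : Prop :=
  (∀ r v, X.rel r v → Y.rel r fun i => f (v i)) ∧
  (∀ x y, X.ieq x y → Y.ieq (f x) (f y)) ∧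
  (∀ x, X.IsRoot x → Y.IsRoot (f x)) ∧
  (∀ x y, X.Cover x y → Y.Cover (f x) (f y))

/-- Embeddings: morphisms that are injective and reflect all relations. -/
def IsEmb (X Y : EObj V) (f : X.carrier → Y.carrier) : Prop :=
  IsHom X Y f ∧ Function.Injective f ∧
  (∀ r v, (Y.rel r fun i => f (v i)) → X.rel r v) ∧
  (∀ x y, Y.ieq (f x) (f y) → X.ieq x y)

/-- Paths: objects whose forest order is finite and linear. -/
def IsPath (X : EObj V) : Prop :=
  Finite X.carrier ∧ ∀ x y : X.carrier, X.le x y ∨ X.le y x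

/-- Pathwise embeddings: morphisms `f : X → Y` such that for every path embedding
`m : P ↪ X` the composite `f ∘ m` is a path embedding. -/
def IsPWEmb (k : ℕ) (X Y : EObj V) (f : X.carrier → Y.carrier) : Prop :=
  IsHom X Y f ∧ ∀ P : EObj V, IsCoalg k P → IsPath P →
    ∀ m : P.carrier → X.carrier, IsEmb P X m → IsEmb P Y fun p => f (m p)

/-- Open morphisms: every commutative square of path embeddings over `f` admits a
diagonal filler. -/
def IsOpen (k : ℕ) (X Y : EObj V) (f : X.carrier → Y.carrier) : Prop :=
  ∀ P Q : EObj V, IsCoalg k P → IsPath P → IsCoalg k Q → IsPath Q →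
    ∀ (i : P.carrier → Q.carrier) (m : P.carrier → X.carrier)
      (n : Q.carrier → Y.carrier),
      IsEmb P Q i → IsEmb P X m → IsEmb Q Y n → (∀ x, n (i x) = f (m x)) →
      ∃ d : Q.carrier → X.carrier, IsHom Q X d ∧ (∀ x, d (i x) = m x) ∧ ∀ q, f (d q) = n q

end EObj
/-- The co-free coalgebra `F_k^I(A) = (E_k J(A), ⊑)` on `J(A)`: non-empty sequences of
elements of `A` of length at most `k`, ordered by the prefix order.  A tuple of sequences
is related iff the sequences are pairwise comparable and their last elements are related
in `J(A)`; the fresh relation `I` is interpreted as comparability plus equality of last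
elements (the diagonal of `J`). -/
def FE (V : Vocab) (k : ℕ) {α : Type} (A : Str V α) : EObj V where
  carrier := {l : List α // l ≠ [] ∧ l.length ≤ k}
  rel r v :=
    (∀ i j, (v i).1 <+: (v j).1 ∨ (v j).1 <+: (v i).1) ∧
    A.rel r fun i => (v i).1.getLast (v i).2.1
  ieq s t := ((s.1 <+: t.1) ∨ (t.1 <+: s.1)) ∧ s.1.getLast s.2.1 = t.1.getLast t.2.1
  le s t := s.1 <+: t.1
theorem pi_zip {V : Vocab} {α β : Type} (A : Str V α) (B : Str V β) (l : List α) (l' : List β)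
    (hl : l'.length = l.length) :
    IsPartialIso A B (l.zip l') ↔
      ((∀ i j : Fin l.length, l[i.1] = l[j.1] ↔ l'[i.1]'(by omega) = l'[j.1]'(by omega)) ∧
       (∀ (r : V.Rel) (v : Fin (V.ar r) → Fin l.length),
        A.rel r (fun t => l[(v t).1]) ↔ B.rel r (fun t => l'[(v t).1]'(by have := (v t).2; omega)))) := by
  have hz : (l.zip l').length = l.length := by simp [hl]
  unfold IsPartialIso
  constructor
  · rintro ⟨h1, h2⟩
    refine ⟨fun i j => ?_, fun r v => ?_⟩
    · simpa using h1 (Fin.cast hz.symm i) (Fin.cast hz.symm j)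
    · simpa using h2 r (fun t => Fin.cast hz.symm (v t))
  · rintro ⟨h1, h2⟩
    refine ⟨fun i j => ?_, fun r v => ?_⟩
    · simpa using h1 (Fin.cast hz i) (Fin.cast hz j)
    · simpa using h2 r (fun t => Fin.cast hz (v t))

theorem pi_prefix {V : Vocab} {α β : Type} (A : Str V α) (B : Str V β) (h t : List (α × β))
    (H : IsPartialIso A B (h ++ t)) : IsPartialIso A B h := by
  have hz : h.length ≤ (h ++ t).length := by simp
  refine ⟨fun i j => ?_, fun r v => ?_⟩
  · simpa using H.1 (Fin.castLE hz i) (Fin.castLE hz j)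
  · simpa using H.2 r (fun t => Fin.castLE hz (v t))

theorem efwin_pi {V : Vocab} {α β : Type} (A : Str V α) (B : Str V β) (a : α) (n : ℕ) :
    ∀ h, EFWin A B n h → IsPartialIso A B h := by
  induction n with
  | zero => intro h H; exact H
  | succ n ih =>
    intro h H
    obtain ⟨b, hb⟩ := H a
    exact pi_prefix A B _ _ (ih _ hb)

structure Strat {V : Vocab} {α β : Type} (A : Str V α) (B : Str V β) (k : ℕ) (h : List (α × β))
    (s : List α → List β) : Prop where
  len : ∀ l, l.length ≤ k → (s l).length = l.length
  mono : ∀ l l', l <+: l' → l'.length ≤ k → s l <+: s l'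
  pi : ∀ l, l ≠ [] → l.length ≤ k → IsPartialIso A B (h ++ l.zip (s l))

theorem strat_of_efwin {V : Vocab} {α β : Type} (A : Str V α) (B : Str V β) (n : ℕ) :
    ∀ h, EFWin A B n h → ∃ s, Strat A B n h s := by
  induction n with
  | zero =>
    intro h H
    refine ⟨fun _ => [], ?_, ?_, ?_⟩
    · intro l hl; simp at hl; simp [hl]
    · intros; simp
    · intro l h1 h2; simp at h2; contradiction
  | succ n ih =>
    intro h H
    choose b hb using H
    choose s hs using fun a => ih _ (hb a)
    refine ⟨fun l => match l with | [] => [] | a :: l => b a :: s a l, ?_, ?_, ?_⟩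
    · rintro (_ | ⟨a, l⟩) hl
      · rfl
      · simpa using (hs a).len l (by simpa using hl)
    · rintro (_ | ⟨a, l⟩) (_ | ⟨a', l'⟩) hp hl
      · simp
      · simp
      · simp at hp
      · rw [List.cons_prefix_cons] at hp
        obtain ⟨rfl, hp⟩ := hp
        simp only [List.cons_prefix_cons, true_and]
        exact (hs a).mono l l' hp (by simpa using hl)
    · rintro (_ | ⟨a, l⟩) h1 hl
      · contradiction
      · by_cases hn : l = []
        · subst hn
          simpa using efwin_pi A B a n _ (hb a)
        · simpa using (hs a).pi l hn (by simpa using hl)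

theorem efwin_of_strat {V : Vocab} (har : ∀ r : V.Rel, V.ar r ≠ 0)
    {α β : Type} (A : Str V α) (B : Str V β) (k : ℕ) (s : List α → List β)
    (hs : Strat A B k [] s) (n : ℕ) :
    ∀ l : List α, l.length + n = k → EFWin A B n (l.zip (s l)) := by
  induction n with
  | zero =>
    intro l hl
    by_cases h : l = []
    · subst h
      refine ⟨fun i => ?_, fun r v => ?_⟩
      · exact absurd i.2 (by simp)
      · exact absurd (v ⟨0, Nat.pos_of_ne_zero (har r)⟩).2 (by simp)
    · have := hs.pi l h (by omega)
      rw [List.nil_append] at this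
      exact this
  | succ n ih =>
    intro l hl a
    obtain ⟨t, ht⟩ := hs.mono l (l ++ [a]) (by simp) (by simp; omega)
    have h1 := hs.len l (by omega)
    have h2 := hs.len (l ++ [a]) (by simp; omega)
    rw [← ht] at h2
    have h3 : t.length = 1 := by simp at h2; omega
    obtain ⟨b, rfl⟩ := List.length_eq_one_iff.1 h3
    refine ⟨b, ?_⟩
    have := ih (l ++ [a]) (by simp; omega)
    rw [← ht, List.zip_append h1.symm] at this
    exact this

theorem last_prefix {α : Type} {p l : List α} (hp : p <+: l) (h : p ≠ []) :
    p.getLast h = l[p.length - 1]'(by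
      have := hp.length_le; have := List.length_pos_iff.2 h; omega) := by
  rw [List.getLast_eq_getElem]
  exact hp.getElem _

theorem Strat.key {V : Vocab} {α β : Type} {A : Str V α} {B : Str V β} {k : ℕ}
    {s : List α → List β} (hs : Strat A B k [] s) (l : List α) (hn : l ≠ []) (hl : l.length ≤ k) :
    (∀ p q (hp : p ≠ []) (hq : q ≠ []) (hp' : s p ≠ []) (hq' : s q ≠ []), p <+: l → q <+: l →
      (p.getLast hp = q.getLast hq ↔ (s p).getLast hp' = (s q).getLast hq')) ∧
    ∀ (r : V.Rel) (v : Fin (V.ar r) → List α) (h : ∀ i, v i ≠ []) (h' : ∀ i, s (v i) ≠ []),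
      (∀ i, v i <+: l) →
      (A.rel r (fun i => (v i).getLast (h i)) ↔ B.rel r (fun i => (s (v i)).getLast (h' i))) := by
  have h0 := hs.pi l hn hl
  rw [List.nil_append, pi_zip _ _ _ _ (hs.len l hl)] at h0
  have e : ∀ p (hp : p ≠ []) (hp' : s p ≠ []) (hpl : p <+: l),
      (s p).getLast hp' = (s l)[p.length - 1]'(by
        have := hs.len l hl
        have := hpl.length_le; have := List.length_pos_iff.2 hp; omega) := by
    intro p hp hp' hpl
    rw [last_prefix (hs.mono p l hpl hl)]
    have := hs.len p (hpl.length_le.trans hl)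
    simp only [this]
  have lt : ∀ p (hp : p ≠ []) (hpl : p <+: l), p.length - 1 < l.length := by
    intro p hp hpl
    have := hpl.length_le; have := List.length_pos_iff.2 hp; omega
  refine ⟨fun p q hp hq hp' hq' hpl hql => ?_, fun r v h h' hv => ?_⟩
  · rw [e p hp hp' hpl, e q hq hq' hql, last_prefix hpl, last_prefix hql]
    exact h0.1 ⟨_, lt p hp hpl⟩ ⟨_, lt q hq hql⟩
  · have := h0.2 r (fun i => ⟨_, lt _ (h i) (hv i)⟩)
    simp only [fun i => e _ (h i) (h' i) (hv i), fun i => last_prefix (hv i) (h i)]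
    exact this

theorem exists_top {α : Type} {n : ℕ} (hn : n ≠ 0) (v : Fin n → List α)
    (h : ∀ i j, v i <+: v j ∨ v j <+: v i) : ∃ j, ∀ i, v i <+: v j := by
  have : Nonempty (Fin n) := ⟨⟨0, Nat.pos_of_ne_zero hn⟩⟩
  obtain ⟨j, hj⟩ := Finite.exists_max (fun i => (v i).length)
  refine ⟨j, fun i => ?_⟩
  rcases h i j with h | h
  · exact h
  · rw [h.eq_of_length_le (hj i)]

theorem FE_cover {V : Vocab} {k : ℕ} {α : Type} {A : Str V α} (x y : (FE V k A).carrier) :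
    (FE V k A).Cover x y ↔ x.1 <+: y.1 ∧ y.1.length = x.1.length + 1 := by
  constructor
  · rintro ⟨h1, h2, h3⟩
    refine ⟨h1, ?_⟩
    have hlt : x.1.length < y.1.length := by
      by_contra hc
      exact h2 (Subtype.ext (List.IsPrefix.eq_of_length_le h1 (by omega)))
    have hx := x.2
    have hy := y.2
    have hx0 := List.length_pos_iff.2 x.2.1
    let z : (FE V k A).carrier := ⟨y.1.take (x.1.length + 1), by
      constructor
      · rw [← List.length_pos_iff]; simp; omega
      · simp; omega⟩
    have hz : z.1.length = x.1.length + 1 := by simp [z]; omega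
    rcases h3 z (by
      show x.1 <+: y.1.take _
      rw [List.prefix_take_iff]; exact ⟨h1, by omega⟩) (List.take_prefix _ _) with h | h
    · rw [h] at hz; omega
    · rw [← h]; exact hz
  · rintro ⟨h1, h2⟩
    refine ⟨h1, ?_, ?_⟩
    · rintro rfl; omega
    · intro z hz hz'
      have a := List.IsPrefix.length_le hz
      have b := List.IsPrefix.length_le hz'
      rcases Nat.lt_or_ge x.1.length z.1.length with h | h
      · right; exact Subtype.ext (List.IsPrefix.eq_of_length_le hz' (by omega))
      · left; exact (Subtype.ext (List.IsPrefix.eq_of_length_le hz (by omega))).symm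

theorem FE_root {V : Vocab} {k : ℕ} {α : Type} {A : Str V α} (x : (FE V k A).carrier) :
    (FE V k A).IsRoot x ↔ x.1.length = 1 := by
  have hx := x.2
  have hx0 := List.length_pos_iff.2 x.2.1
  constructor
  · intro h
    let z : (FE V k A).carrier := ⟨x.1.take 1, by
      constructor
      · rw [← List.length_pos_iff]; simp; omega
      · simp; omega⟩
    have hz : z.1.length = 1 := by simp [z]; omega
    rw [← h z (List.take_prefix _ _)]; exact hz
  · intro h y hy
    have := List.length_pos_iff.2 y.2.1
    exact Subtype.ext (List.IsPrefix.eq_of_length_le hy (by omega))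

theorem path_mono {V : Vocab} {k k' : ℕ} {α : Type} {A : Str V α} (P : EObj V)
    (hP : EObj.IsCoalg k' P) (hp : EObj.IsPath P) (m : P.carrier → (FE V k A).carrier)
    (hm : ∀ x y, P.Cover x y → (FE V k A).Cover (m x) (m y)) (x y : P.carrier)
    (hxy : P.le x y) : (m x).1 <+: (m y).1 := by
  classical
  obtain ⟨hr, ht, ha, -, -⟩ := hP
  have := hp.1
  let : PartialOrder P.carrier :=
    { le := P.le, le_refl := hr, le_trans := ht, le_antisymm := ha }
  let : Fintype P.carrier := Fintype.ofFinite _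
  let : LocallyFiniteOrder P.carrier := Fintype.toLocallyFiniteOrder
  have h : Relation.ReflTransGen (· ⋖ ·) x y := le_iff_reflTransGen_covBy.1 hxy
  induction h with
  | refl => exact List.prefix_rfl
  | @tail b c h1 h2 ih =>
    refine (ih (le_iff_reflTransGen_covBy.2 h1)).trans (((FE_cover _ _).1 (hm b c ?_)).1)
    refine ⟨h2.le, h2.ne, fun z hz hz' => ?_⟩
    exact h2.eq_or_eq hz hz'

theorem pw_of_strat {V : Vocab} (har : ∀ r : V.Rel, V.ar r ≠ 0)
    {α β : Type} (A : Str V α) (B : Str V β) (k : ℕ) (s : List α → List β)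
    (hs : Strat A B k [] s) : ∃ f, EObj.IsPWEmb k (FE V k A) (FE V k B) f := by
  have hne : ∀ x : (FE V k A).carrier, s x.1 ≠ [] := by
    intro x
    have hx0 := List.length_pos_iff.2 x.2.1
    rw [← List.length_pos_iff, hs.len _ x.2.2]; exact hx0
  let f : (FE V k A).carrier → (FE V k B).carrier := fun x => ⟨s x.1, hne x, by
    rw [hs.len _ x.2.2]; exact x.2.2⟩
  have hrel : ∀ r (v : Fin (V.ar r) → (FE V k A).carrier),
      (∀ i j, (v i).1 <+: (v j).1 ∨ (v j).1 <+: (v i).1) →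
      ((FE V k A).rel r v ↔ (FE V k B).rel r fun i => f (v i)) := by
    intro r v hv
    obtain ⟨j, hj⟩ := exists_top (har r) (fun i => (v i).1) hv
    have h := (hs.key (v j).1 (v j).2.1 (v j).2.2).2 r (fun i => (v i).1) (fun i => (v i).2.1)
      (fun i => hne _) hj
    have hv' : ∀ i j, (f (v i)).1 <+: (f (v j)).1 ∨ (f (v j)).1 <+: (f (v i)).1 := fun i j =>
      (hv i j).imp (fun h => hs.mono _ _ h (v j).2.2) (fun h => hs.mono _ _ h (v i).2.2)
    exact ⟨fun H => ⟨hv', h.1 H.2⟩, fun H => ⟨hv, h.2 H.2⟩⟩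
  have hieq : ∀ x y : (FE V k A).carrier, (x.1 <+: y.1 ∨ y.1 <+: x.1) →
      ((FE V k A).ieq x y ↔ (FE V k B).ieq (f x) (f y)) := by
    intro x y hv
    have h : x.1.getLast x.2.1 = y.1.getLast y.2.1 ↔
        (s x.1).getLast (hne x) = (s y.1).getLast (hne y) := by
      rcases hv with h | h
      · exact (hs.key y.1 y.2.1 y.2.2).1 _ _ _ _ _ _ h List.prefix_rfl
      · exact (hs.key x.1 x.2.1 x.2.2).1 _ _ _ _ _ _ List.prefix_rfl h
    have hv' : (f x).1 <+: (f y).1 ∨ (f y).1 <+: (f x).1 :=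
      hv.imp (fun h => hs.mono _ _ h y.2.2) (fun h => hs.mono _ _ h x.2.2)
    exact ⟨fun H => ⟨hv', h.1 H.2⟩, fun H => ⟨hv, h.2 H.2⟩⟩
  have hlen : ∀ x, (f x).1.length = x.1.length := fun x => hs.len _ x.2.2
  have hhom : EObj.IsHom (FE V k A) (FE V k B) f := by
    refine ⟨fun r v h => (hrel r v h.1).1 h, fun x y h => (hieq x y h.1).1 h, ?_, ?_⟩
    · intro x; rw [FE_root, FE_root, hlen]; exact id
    · intro x y; rw [FE_cover, FE_cover, hlen, hlen]
      exact fun h => ⟨hs.mono _ _ h.1 y.2.2, h.2⟩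
  refine ⟨f, hhom, ?_⟩
  intro P hP hp m hm
  obtain ⟨⟨m1, m2, m3, m4⟩, mi, mr, me⟩ := hm
  have comp : ∀ x y, (m x).1 <+: (m y).1 ∨ (m y).1 <+: (m x).1 := fun x y =>
    (hp.2 x y).imp (path_mono P hP hp m m4 x y) (path_mono P hP hp m m4 y x)
  refine ⟨⟨fun r v h => hhom.1 _ _ (m1 r v h), fun x y h => hhom.2.1 _ _ (m2 x y h),
    fun x h => hhom.2.2.1 _ (m3 x h), fun x y h => hhom.2.2.2 _ _ (m4 x y h)⟩, ?_, ?_, ?_⟩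
  · intro x y hxy
    have hl : (m x).1.length = (m y).1.length := by
      rw [← hlen, ← hlen]; exact congrArg (fun z => z.1.length) hxy
    apply mi
    rcases comp x y with h | h
    · exact Subtype.ext (h.eq_of_length hl)
    · exact (Subtype.ext (h.eq_of_length hl.symm)).symm
  · intro r v h
    exact mr r v ((hrel r _ (fun i j => comp _ _)).2 h)
  · intro x y h
    exact me x y ((hieq _ _ (comp _ _)).2 h)

theorem hom_len_mono {V : Vocab} {α β : Type} (A : Str V α) (B : Str V β) (k : ℕ)
    (f : (FE V k A).carrier → (FE V k B).carrier)
    (hf : EObj.IsHom (FE V k A) (FE V k B) f) (n : ℕ) :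
    ∀ x : (FE V k A).carrier, x.1.length = n → (f x).1.length = n ∧
      ∀ y : (FE V k A).carrier, y.1 <+: x.1 → (f y).1 <+: (f x).1 := by
  induction n with
  | zero => intro x hx; exact absurd (List.length_eq_zero_iff.1 hx) x.2.1
  | succ n ih =>
    intro x hx
    rcases Nat.eq_zero_or_pos n with rfl | hn
    · refine ⟨(FE_root _).1 (hf.2.2.1 x ((FE_root x).2 hx)), fun y hy => ?_⟩
      have := List.length_pos_iff.2 y.2.1
      have : y = x := Subtype.ext (hy.eq_of_length_le (by omega))
      rw [this]
    · have hk := x.2.2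
      let z : (FE V k A).carrier := ⟨x.1.take n, by
        constructor
        · rw [← List.length_pos_iff]; simp; omega
        · simp; omega⟩
      have hz : z.1.length = n := by simp [z]; omega
      have hc := (FE_cover _ _).1 (hf.2.2.2 z x ((FE_cover z x).2
        ⟨List.take_prefix _ _, by omega⟩))
      obtain ⟨i1, i2⟩ := ih z hz
      refine ⟨by omega, fun y hy => ?_⟩
      rcases Nat.lt_or_ge n y.1.length with h | h
      · have : y = x := Subtype.ext (hy.eq_of_length_le (by omega))
        rw [this]
      · refine (i2 y ?_).trans hc.1
        show y.1 <+: x.1.take n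
        rw [List.prefix_take_iff]; exact ⟨hy, h⟩

/-- The path of all non-empty prefixes of `l`. -/
def pathOf (V : Vocab) (k : ℕ) {α : Type} (A : Str V α) (l : List α) : EObj V where
  carrier := {x : (FE V k A).carrier // x.1 <+: l}
  rel r v := (FE V k A).rel r fun i => (v i).1
  ieq x y := (FE V k A).ieq x.1 y.1
  le x y := (FE V k A).le x.1 y.1

theorem pathOf_total {V : Vocab} {k : ℕ} {α : Type} {A : Str V α} {l : List α}
    (x y : (pathOf V k A l).carrier) :
    (pathOf V k A l).le x y ∨ (pathOf V k A l).le y x :=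
  List.prefix_or_prefix_of_prefix x.2 y.2

theorem pathOf_inj {V : Vocab} {k : ℕ} {α : Type} {A : Str V α} {l : List α}
    (x y : (pathOf V k A l).carrier) (h : x.1.1.length = y.1.1.length) : x = y := by
  apply Subtype.ext; apply Subtype.ext
  rcases pathOf_total x y with h' | h'
  · exact List.IsPrefix.eq_of_length h' h
  · exact (List.IsPrefix.eq_of_length h' h.symm).symm

theorem pathOf_finite {V : Vocab} {k : ℕ} {α : Type} {A : Str V α} {l : List α} :
    Finite (pathOf V k A l).carrier := by
  refine Finite.of_injective (β := Fin (k + 1))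
    (fun x => ⟨x.1.1.length, Nat.lt_succ_of_le x.1.2.2⟩) ?_
  intro x y h
  exact pathOf_inj x y (by simpa using h)

theorem pathOf_coalg {V : Vocab} {k : ℕ} {α : Type} {A : Str V α} {l : List α} :
    EObj.IsCoalg k (pathOf V k A l) := by
  have := pathOf_finite (V := V) (k := k) (A := A) (l := l)
  refine ⟨fun x => List.prefix_rfl, fun x y z h h' => List.IsPrefix.trans h h', ?_, ?_,
    fun x y _ => pathOf_total x y⟩
  · intro x y h h'
    exact pathOf_inj x y (le_antisymm (List.IsPrefix.length_le h) (List.IsPrefix.length_le h'))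
  · intro x
    refine ⟨Set.toFinite _, ?_, fun y z _ _ => pathOf_total y z⟩
    have := Set.ncard_le_ncard_of_injOn (s := {y | (pathOf V k A l).le y x})
      (t := (Finset.range (k + 1) : Set ℕ)) (fun y => y.1.1.length)
      (fun y _ => by simpa using Nat.lt_succ_of_le y.1.2.2)
      (fun y _ z _ h => pathOf_inj y z h) (Finset.finite_toSet _)
    simpa using this

theorem pathOf_emb {V : Vocab} {k : ℕ} {α : Type} {A : Str V α} {l : List α} :
    EObj.IsEmb (pathOf V k A l) (FE V k A) (fun x => x.1) := by
  refine ⟨⟨fun r v h => h, fun x y h => h, ?_, ?_⟩, Subtype.val_injective, fun r v h => h,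
    fun x y h => h⟩
  · intro x h y hy
    exact congrArg Subtype.val (h ⟨y, List.IsPrefix.trans hy x.2⟩ hy)
  · rintro x y ⟨h1, h2, h3⟩
    refine ⟨h1, fun h => h2 (Subtype.ext h), fun z hz hz' => ?_⟩
    exact (h3 ⟨z, List.IsPrefix.trans hz' y.2⟩ hz hz').imp (congrArg Subtype.val)
      (congrArg Subtype.val)

theorem strat_of_pw {V : Vocab} {α β : Type} (A : Str V α) (B : Str V β) (k : ℕ)
    (f : (FE V k A).carrier → (FE V k B).carrier)
    (hf : EObj.IsPWEmb k (FE V k A) (FE V k B) f) : ∃ s, Strat A B k [] s := by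
  classical
  obtain ⟨hom, pw⟩ := hf
  have hlen : ∀ x, (f x).1.length = x.1.length := fun x => (hom_len_mono A B k f hom _ x rfl).1
  have hmono : ∀ x y, y.1 <+: x.1 → (f y).1 <+: (f x).1 :=
    fun x => (hom_len_mono A B k f hom _ x rfl).2
  refine ⟨fun l => if h : l ≠ [] ∧ l.length ≤ k then (f ⟨l, h⟩).1 else [], ?_, ?_, ?_⟩
  · intro l hl
    by_cases h : l = []
    · simp [h]
    · rw [dif_pos ⟨h, hl⟩]; exact hlen _
  · intro l l' hp hl
    by_cases h : l = []
    · simp [h]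
    · have h' : l' ≠ [] := by rintro rfl; simp at hp; contradiction
      beta_reduce
      rw [dif_pos ⟨h, hp.length_le.trans hl⟩, dif_pos ⟨h', hl⟩]
      exact hmono _ _ hp
  · intro l hn hl
    rw [dif_pos ⟨hn, hl⟩, List.nil_append]
    refine (pi_zip A B l _ (hlen ⟨l, hn, hl⟩)).2 ?_
    obtain ⟨⟨p1, p2, -, -⟩, -, p3, p4⟩ := pw _ (pathOf_coalg (l := l))
      ⟨pathOf_finite, pathOf_total⟩ _ pathOf_emb
    let g : Fin l.length → (pathOf V k A l).carrier := fun i => ⟨⟨l.take (i.1 + 1), by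
        have := i.2
        constructor
        · rw [← List.length_pos_iff, List.length_take]; omega
        · simp; omega⟩, List.take_prefix _ _⟩
    have gl : ∀ i, (g i).1.1.length = i.1 + 1 := by
      intro i; have := i.2; simp only [g, List.length_take]; omega
    have ga : ∀ i, (g i).1.1.getLast (g i).1.2.1 = l[i.1] := by
      intro i
      rw [last_prefix (g i).2]
      simp only [gl, Nat.add_sub_cancel]
    have gb : ∀ i : Fin l.length, (f (g i).1).1.getLast (f (g i).1).2.1 =
        (f ⟨l, hn, hl⟩).1[i.1]'(lt_of_lt_of_eq i.2 (hlen ⟨l, hn, hl⟩).symm) := by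
      intro i
      rw [last_prefix (hmono ⟨l, hn, hl⟩ (g i).1 (g i).2)]
      simp only [hlen, gl, Nat.add_sub_cancel]
    constructor
    · intro i j
      rw [← ga, ← ga, ← gb, ← gb]
      constructor
      · intro h
        exact (p2 (g i) (g j) ⟨pathOf_total _ _, h⟩).2
      · intro h
        exact (p4 (g i) (g j) ⟨(pathOf_total (g i) (g j)).imp (hmono _ _) (hmono _ _), h⟩).2
    · intro r v
      simp only [← ga, ← gb]
      constructor
      · intro h
        exact (p1 r (fun t => g (v t)) ⟨fun i j => pathOf_total (g (v i)) (g (v j)), h⟩).2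
      · intro h
        exact (p3 r (fun t => g (v t)) ⟨fun i j =>
          (pathOf_total (g (v i)) (g (v j))).imp (hmono _ _) (hmono _ _), h⟩).2

/-- there exists a pathwise embedding `F_k^I(A) → F_k^I(B)` in `EM(E_k^I)`
if, and only if, Duplicator has a winning strategy in the `k`-round existential
Ehrenfeucht–Fraïssé game from `A` to `B`. -/
theorem pathwise_embedding_iff_existential_EF_game
    (V : Vocab) [Finite V.Rel] (har : ∀ r : V.Rel, V.ar r ≠ 0)
    {α β : Type} (A : Str V α) (B : Str V β) (k : ℕ) :
    (∃ f, EObj.IsPWEmb k (FE V k A) (FE V k B) f) ↔ EFWin A B k [] := by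
  constructor
  · rintro ⟨f, hf⟩
    obtain ⟨s, hs⟩ := strat_of_pw A B k f hf
    simpa using efwin_of_strat har A B k s hs k [] (by simp)
  · intro h
    obtain ⟨s, hs⟩ := strat_of_efwin A B k [] h
    exact pw_of_strat har A B k s hs
end

section
/- For all σ-structures A and B and every positive integer k, the following are equivalent: (i) every sentence of ∃L^k that is true in A is true in B; (ii) Duplicator has a winning strategy in the existential k-pebble game from A to B. -/
/-- Existential formulas of the `k`-variable fragment `L^k` of the infinitary logic
`L_{∞,ω}(σ)`: formulas using only the variables `x_1, …, x_k`, with set-sized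
conjunctions and disjunctions, no universal quantifiers, and negations only on atomic
formulas. -/
inductive LFml (V : Vocab) (k : ℕ) : Type 1
  | rel (r : V.Rel) (v : Fin (V.ar r) → Fin k) : LFml V k
  | nrel (r : V.Rel) (v : Fin (V.ar r) → Fin k) : LFml V k
  | eq (i j : Fin k) : LFml V k
  | ne (i j : Fin k) : LFml V k
  | iand (ι : Type) (f : ι → LFml V k) : LFml V k
  | ior (ι : Type) (f : ι → LFml V k) : LFml V k
  | ex (i : Fin k) (φ : LFml V k) : LFml V k

namespace LFml

/-- Free variables. -/
def freeVars {V : Vocab} {k : ℕ} : LFml V k → Set (Fin k)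
  | .rel _ v => Set.range v
  | .nrel _ v => Set.range v
  | .eq i j => {i, j}
  | .ne i j => {i, j}
  | .iand _ f => ⋃ x, freeVars (f x)
  | .ior _ f => ⋃ x, freeVars (f x)
  | .ex i φ => freeVars φ \ {i}

/-- Satisfaction, relative to a partial environment (so that sentences have a
well-defined truth value in every, possibly empty, structure). -/
def Sat {V : Vocab} {k : ℕ} {α : Type} (M : Str V α) :
    LFml V k → (Fin k → Option α) → Prop
  | .rel r v, e => ∃ g : Fin (V.ar r) → α, (∀ i, e (v i) = some (g i)) ∧ M.rel r g
  | .nrel r v, e => ∃ g : Fin (V.ar r) → α, (∀ i, e (v i) = some (g i)) ∧ ¬ M.rel r g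
  | .eq i j, e => ∃ x : α, e i = some x ∧ e j = some x
  | .ne i j, e => ∃ x y : α, e i = some x ∧ e j = some y ∧ x ≠ y
  | .iand _ f, e => ∀ x, Sat M (f x) e
  | .ior _ f, e => ∃ x, Sat M (f x) e
  | .ex i φ, e => ∃ a : α, Sat M φ (Function.update e i (some a))

end LFml
/-- The relation determined by the current placings `ρ` of the `k` pairs of pebbles is a
partial isomorphism between `A` and `B`. -/
def PebblesIso {V : Vocab} {α β : Type} (A : Str V α) (B : Str V β) {k : ℕ}
    (ρ : Fin k → Option (α × β)) : Prop :=
  (∀ (p q : Fin k) (x x' : α) (y y' : β),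
    ρ p = some (x, y) → ρ q = some (x', y') → (x = x' ↔ y = y')) ∧
  (∀ (r : V.Rel) (v : Fin (V.ar r) → Fin k) (g : Fin (V.ar r) → α × β),
    (∀ t, ρ (v t) = some (g t)) →
      (A.rel r (fun t => (g t).1) ↔ B.rel r fun t => (g t).2))

/-- Duplicator has a winning strategy in the existential `k`-pebble game from `A` to
`B`: in each round Spoiler places (or relocates) a pebble on an element of `A` and
Duplicator places the corresponding pebble on an element of `B`; Duplicator wins a round
if the current pebble placings form a partial isomorphism, and wins the game if they can
keep winning after `n` rounds for every `n`.  This is rendered by the existence of a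
winning invariant (a non-empty family of safe positions closed under Spoiler's moves). -/
def EPebWin (V : Vocab) {α β : Type} (A : Str V α) (B : Str V β) (k : ℕ) : Prop :=
  ∃ S : (Fin k → Option (α × β)) → Prop,
    S (fun _ => none) ∧
    ∀ ρ, S ρ → PebblesIso A B ρ ∧
      ∀ (p : Fin k) (a : α), ∃ b : β, S (Function.update ρ p (some (a, b)))
theorem map_upd {γ δ : Type} {k : ℕ} (f : γ → δ) (ρ : Fin k → Option γ) (p : Fin k) (c : γ) :
    (fun i => (Function.update ρ p (some c) i).map f) =
      Function.update (fun i => (ρ i).map f) p (some (f c)) := by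
  funext i
  by_cases h : i = p
  · subst h; simp
  · simp [h]

theorem sat_transfer {V : Vocab} {α β : Type} (A : Str V α) (B : Str V β) {k : ℕ}
    (S : (Fin k → Option (α × β)) → Prop)
    (hS : ∀ ρ, S ρ → PebblesIso A B ρ ∧
      ∀ (p : Fin k) (a : α), ∃ b : β, S (Function.update ρ p (some (a, b))))
    (φ : LFml V k) : ∀ ρ, S ρ → φ.Sat A (fun i => (ρ i).map Prod.fst) →
      φ.Sat B (fun i => (ρ i).map Prod.snd) := by
  induction φ with
  | rel r v =>
    rintro ρ hρ ⟨g, hg, hr⟩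
    have h : ∀ i, ∃ z : α × β, ρ (v i) = some z ∧ z.1 = g i := fun i => by
      simpa only [Option.map_eq_some_iff] using hg i
    choose z hz hz1 using h
    obtain rfl : (fun t => (z t).1) = g := funext hz1
    exact ⟨fun t => (z t).2, fun i => by simp [hz], ((hS ρ hρ).1.2 r v z hz).1 hr⟩
  | nrel r v =>
    rintro ρ hρ ⟨g, hg, hr⟩
    have h : ∀ i, ∃ z : α × β, ρ (v i) = some z ∧ z.1 = g i := fun i => by
      simpa only [Option.map_eq_some_iff] using hg i
    choose z hz hz1 using h
    obtain rfl : (fun t => (z t).1) = g := funext hz1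
    exact ⟨fun t => (z t).2, fun i => by simp [hz],
      fun hb => hr (((hS ρ hρ).1.2 r v z hz).2 hb)⟩
  | eq i j =>
    rintro ρ hρ ⟨x, hi, hj⟩
    obtain ⟨⟨x1, y1⟩, h1, rfl⟩ := Option.map_eq_some_iff.1 hi
    obtain ⟨⟨x2, y2⟩, h2, h3⟩ := Option.map_eq_some_iff.1 hj
    have := ((hS ρ hρ).1.1 i j _ _ _ _ h1 h2).1 h3.symm
    exact ⟨y1, by simp [h1], by simp [h2, this]⟩
  | ne i j =>
    rintro ρ hρ ⟨x, x', hi, hj, hne⟩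
    obtain ⟨⟨x1, y1⟩, h1, rfl⟩ := Option.map_eq_some_iff.1 hi
    obtain ⟨⟨x2, y2⟩, h2, rfl⟩ := Option.map_eq_some_iff.1 hj
    exact ⟨y1, y2, by simp [h1], by simp [h2],
      fun h => hne (((hS ρ hρ).1.1 i j _ _ _ _ h1 h2).2 h)⟩
  | iand ι f ih => exact fun ρ hρ h x => ih x ρ hρ (h x)
  | ior ι f ih => exact fun ρ hρ ⟨x, h⟩ => ⟨x, ih x ρ hρ h⟩
  | ex i φ ih =>
    rintro ρ hρ ⟨a, h⟩
    obtain ⟨b, hb⟩ := (hS ρ hρ).2 i a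
    refine ⟨b, ?_⟩
    have := ih _ hb
    rw [map_upd, map_upd] at this
    exact this h

/-- every sentence of `∃L^k` true in `A` is true in `B` if, and only if,
Duplicator has a winning strategy in the existential `k`-pebble game from `A` to `B`. -/
theorem existential_pebble_game_characterisation
    (V : Vocab) [Finite V.Rel] (har : ∀ r : V.Rel, V.ar r ≠ 0)
    {α β : Type} (A : Str V α) (B : Str V β) (k : ℕ) (hk : 0 < k) :
    (∀ φ : LFml V k, φ.freeVars = ∅ →
        φ.Sat A (fun _ => none) → φ.Sat B (fun _ => none)) ↔
      EPebWin V A B k := by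
  constructor
  · intro H
    refine ⟨fun ρ => ∀ φ : LFml V k, (∀ i ∈ φ.freeVars, ρ i ≠ none) →
      φ.Sat A (fun i => (ρ i).map Prod.fst) → φ.Sat B (fun i => (ρ i).map Prod.snd), ?_, ?_⟩
    · intro φ hφ
      exact H φ (Set.eq_empty_iff_forall_notMem.2 fun i hi => hφ i hi rfl)
    · intro ρ hρ
      refine ⟨⟨?_, ?_⟩, ?_⟩
      · intro p q x x' y y' hp hq
        have hd : ∀ i ∈ ({p, q} : Set (Fin k)), ρ i ≠ none := by
          rintro i (rfl | rfl) <;> simp [hp, hq]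
        constructor
        · rintro rfl
          obtain ⟨z, h1, h2⟩ := hρ (.eq p q) hd ⟨x, by simp [hp], by simp [hq]⟩
          simp [hp] at h1
          simp [hq] at h2
          rw [h1, h2]
        · rintro rfl
          by_contra hne
          obtain ⟨z, w, h1, h2, h3⟩ :=
            hρ (.ne p q) hd ⟨x, x', by simp [hp], by simp [hq], hne⟩
          simp [hp] at h1
          simp [hq] at h2
          exact h3 (h1.symm.trans h2)
      · intro r v g hg
        have hd : ∀ i ∈ Set.range v, ρ i ≠ none := by
          rintro _ ⟨t, rfl⟩; simp [hg]
        constructor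
        · intro h
          obtain ⟨g', h1, h2⟩ := hρ (.rel r v) hd ⟨_, fun i => by simp [hg], h⟩
          obtain rfl : (fun t => (g t).2) = g' := funext fun t => by simpa [hg] using h1 t
          exact h2
        · intro h
          by_contra hn
          obtain ⟨g', h1, h2⟩ := hρ (.nrel r v) hd ⟨_, fun i => by simp [hg], hn⟩
          obtain rfl : (fun t => (g t).2) = g' := funext fun t => by simpa [hg] using h1 t
          exact h2 h
      · intro p a
        by_contra hcon
        push Not at hcon
        choose f hf hA hB using hcon
        obtain ⟨b, hb⟩ := hρ (.ex p (.iand β f)) (by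
          rintro i ⟨hi, hip⟩
          obtain ⟨b, hb⟩ := Set.mem_iUnion.1 hi
          have := hf b i hb
          rwa [Function.update_of_ne hip] at this) ⟨a, fun b => by
            have := hA b
            rwa [map_upd] at this⟩
        have h := hB b
        rw [map_upd] at h
        exact h (hb b)
  · rintro ⟨S, h0, hS⟩ φ - hA
    exact sat_transfer A B S hS φ _ h0 hA
end

section
/- For all σ-structures A and B and every positive integer k, there exists a pathwise embedding F_k^I(A) → F_k^I(B) in EM(P_k^I) if, and only if, Duplicator has a winning strategy in the existential k-pebble game from A to B. -/
/-- An object datum for the Eilenberg–Moore category `EM(P_k^I)` of the pebbling comonad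
over `σ^I = σ ∪ {I}`: a `σ`-structure with an interpretation `ieq` of the fresh binary
relation symbol `I`, a (forest) order and a pebbling function. -/
structure PObj (V : Vocab) (k : ℕ) : Type 1 where
  carrier : Type
  rel : ∀ r : V.Rel, (Fin (V.ar r) → carrier) → Prop
  ieq : carrier → carrier → Prop
  le : carrier → carrier → Prop
  peb : carrier → Fin k

namespace PObj

variable {V : Vocab} {k : ℕ}

/-- Gaifman adjacency, with respect to all relations of `σ ∪ {I}`. -/
def Adj (X : PObj V k) (x y : X.carrier) : Prop :=
  x ≠ y ∧ ((∃ r v, X.rel r v ∧ (∃ i, v i = x) ∧ (∃ j, v j = y)) ∨ X.ieq x y ∨ X.ieq y x)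

/-- The covering relation of the order of `X`. -/
def Cover (X : PObj V k) (x y : X.carrier) : Prop :=
  X.le x y ∧ x ≠ y ∧ ∀ z, X.le x z → X.le z y → z = x ∨ z = y

/-- Roots, i.e. minimal elements of the forest order. -/
def IsRoot (X : PObj V k) (x : X.carrier) : Prop := ∀ y, X.le y x → y = x

/-- `X` is (the datum of) a coalgebra for `P_k^I`: a `k`-pebble forest-ordered
`σ^I`-structure. -/
def IsCoalg (X : PObj V k) : Prop :=
  (∀ x, X.le x x) ∧ (∀ x y z, X.le x y → X.le y z → X.le x z) ∧
  (∀ x y, X.le x y → X.le y x → x = y) ∧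
  (∀ x : X.carrier, {y | X.le y x}.Finite ∧
    ∀ y z, X.le y x → X.le z x → X.le y z ∨ X.le z y) ∧
  (∀ x y, X.Adj x y → X.le x y ∨ X.le y x) ∧
  (∀ x y, X.Adj x y → X.le x y → x ≠ y →
    ∀ z, X.le x z → x ≠ z → X.le z y → X.peb x ≠ X.peb z)

/-- Morphisms of `EM(P_k^I)`: homomorphisms of `σ^I`-structures that are forest
morphisms and preserve the pebbling functions. -/
def IsHom (X Y : PObj V k) (f : X.carrier → Y.carrier) : Prop :=
  (∀ r v, X.rel r v → Y.rel r fun i => f (v i)) ∧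
  (∀ x y, X.ieq x y → Y.ieq (f x) (f y)) ∧
  (∀ x, X.IsRoot x → Y.IsRoot (f x)) ∧
  (∀ x y, X.Cover x y → Y.Cover (f x) (f y)) ∧
  (∀ x, Y.peb (f x) = X.peb x)

/-- Embeddings: morphisms that are injective and reflect all relations. -/
def IsEmb (X Y : PObj V k) (f : X.carrier → Y.carrier) : Prop :=
  IsHom X Y f ∧ Function.Injective f ∧
  (∀ r v, (Y.rel r fun i => f (v i)) → X.rel r v) ∧
  (∀ x y, Y.ieq (f x) (f y) → X.ieq x y)

/-- Paths: objects whose forest order is finite and linear. -/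
def IsPath (X : PObj V k) : Prop :=
  Finite X.carrier ∧ ∀ x y : X.carrier, X.le x y ∨ X.le y x

/-- Pathwise embeddings. -/
def IsPWEmb (X Y : PObj V k) (f : X.carrier → Y.carrier) : Prop :=
  IsHom X Y f ∧ ∀ P : PObj V k, IsCoalg P → IsPath P →
    ∀ m : P.carrier → X.carrier, IsEmb P X m → IsEmb P Y fun p => f (m p)

/-- Open morphisms: every commutative square of path embeddings over `f` admits a
diagonal filler. -/
def IsOpen (X Y : PObj V k) (f : X.carrier → Y.carrier) : Prop :=
  ∀ P Q : PObj V k, IsCoalg P → IsPath P → IsCoalg Q → IsPath Q →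
    ∀ (i : P.carrier → Q.carrier) (m : P.carrier → X.carrier)
      (n : Q.carrier → Y.carrier),
      IsEmb P Q i → IsEmb P X m → IsEmb Q Y n → (∀ x, n (i x) = f (m x)) →
      ∃ d : Q.carrier → X.carrier, IsHom Q X d ∧ (∀ x, d (i x) = m x) ∧ ∀ q, f (d q) = n q

end PObj
/-- The co-free coalgebra `F_k^I(A)` for the pebbling comonad on `J(A)`: finite
non-empty sequences of moves `(p_i, a_i)`, ordered by the prefix order.  A tuple of
sequences is related iff the sequences are pairwise comparable, the pebble index of the
last move of a prefix does not reappear in the corresponding suffix, and the elements of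
the last moves are related in `J(A)`; the fresh relation `I` is interpreted accordingly,
with equality of the elements of the last moves. -/
def FP (V : Vocab) (k : ℕ) {α : Type} (A : Str V α) : PObj V k where
  carrier := {l : List (Fin k × α) // l ≠ []}
  rel r v :=
    (∀ i j, (v i).1 <+: (v j).1 ∨ (v j).1 <+: (v i).1) ∧
    (∀ i j w, (v j).1 = (v i).1 ++ w →
      ∀ m ∈ w, m.1 ≠ ((v i).1.getLast (v i).2).1) ∧
    A.rel r fun i => ((v i).1.getLast (v i).2).2
  ieq s t :=
    ((s.1 <+: t.1) ∨ (t.1 <+: s.1)) ∧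
    (∀ w, t.1 = s.1 ++ w → ∀ m ∈ w, m.1 ≠ (s.1.getLast s.2).1) ∧
    (∀ w, s.1 = t.1 ++ w → ∀ m ∈ w, m.1 ≠ (t.1.getLast t.2).1) ∧
    (s.1.getLast s.2).2 = (t.1.getLast t.2).2
  le s t := s.1 <+: t.1
  peb s := (s.1.getLast s.2).1
section Helpers

variable {V : Vocab} {k : ℕ} {α β : Type}

/-- `F` plays Duplicator's responses and `ρ` records the positions. -/
def PSpec (F : List (Fin k × α) → List (Fin k × β))
    (ρ : List (Fin k × α) → Fin k → Option (α × β)) : Prop :=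
  F [] = [] ∧ (ρ [] = fun _ => none) ∧
  ∀ l m, ∃ b, F (l ++ [m]) = F l ++ [(m.1, b)] ∧
    ρ (l ++ [m]) = Function.update (ρ l) m.1 (some (m.2, b))

/-- The pebble `p` is not reused from `s` to `t`. -/
def NR {γ : Type} (s t : List (Fin k × γ)) (p : Fin k) : Prop :=
  ∀ w, t = s ++ w → ∀ m ∈ w, m.1 ≠ p

variable {F : List (Fin k × α) → List (Fin k × β)}
  {ρ : List (Fin k × α) → Fin k → Option (α × β)}

theorem PSpec.app (h : PSpec F ρ) (s w : List (Fin k × α)) :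
    ∃ w', F (s ++ w) = F s ++ w' ∧ w'.map Prod.fst = w.map Prod.fst := by
  induction w using List.reverseRecOn with
  | nil => exact ⟨[], by simp⟩
  | append_singleton w m ih =>
    obtain ⟨w', h1, h2⟩ := ih
    obtain ⟨b, hb, _⟩ := h.2.2 (s ++ w) m
    refine ⟨w' ++ [(m.1, b)], ?_, by simp [h2]⟩
    rw [← List.append_assoc, hb, h1, List.append_assoc]

theorem PSpec.len (h : PSpec F ρ) (s : List (Fin k × α)) : (F s).length = s.length := by
  obtain ⟨w', h1, h2⟩ := h.app [] s
  have := congrArg List.length h2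
  simp [h.1] at h1 this
  rw [h1, this]

theorem PSpec.pre (h : PSpec F ρ) {s t : List (Fin k × α)} (hst : s <+: t) : F s <+: F t := by
  obtain ⟨w, rfl⟩ := hst
  obtain ⟨w', h1, _⟩ := h.app s w
  exact ⟨w', h1.symm⟩

theorem PSpec.ne (h : PSpec F ρ) {s : List (Fin k × α)} (hs : s ≠ []) : F s ≠ [] := by
  intro h0
  have := h.len s
  rw [h0] at this
  exact hs (List.length_eq_zero_iff.1 this.symm)

theorem PSpec.last (h : PSpec F ρ) {s : List (Fin k × α)} (hs : s ≠ []) :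
    ((F s).getLast (h.ne hs)).1 = (s.getLast hs).1 := by
  induction s using List.reverseRecOn with
  | nil => exact absurd rfl hs
  | append_singleton s m ih =>
    obtain ⟨b, hb, _⟩ := h.2.2 s m
    simp [hb]

theorem PSpec.nr (h : PSpec F ρ) {s t : List (Fin k × α)} (hst : s <+: t ∨ t <+: s) (p : Fin k) :
    NR (F s) (F t) p ↔ NR s t p := by
  rcases hst with ⟨w, rfl⟩ | ⟨w, rfl⟩
  · obtain ⟨w', h1, h2⟩ := h.app s w
    have key : (∀ m ∈ w', m.1 ≠ p) ↔ (∀ m ∈ w, m.1 ≠ p) := by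
      have a1 : (∀ m ∈ w', m.1 ≠ p) ↔ ∀ q ∈ w'.map Prod.fst, q ≠ p := by
        simp only [List.forall_mem_map]
      have a2 : (∀ m ∈ w, m.1 ≠ p) ↔ ∀ q ∈ w.map Prod.fst, q ≠ p := by
        simp only [List.forall_mem_map]
      rw [a1, a2, h2]
    constructor
    · intro hn u hu
      rw [← List.append_cancel_left hu]
      exact key.1 (hn w' h1)
    · intro hn u hu
      rw [h1] at hu
      rw [← List.append_cancel_left hu]
      exact key.2 (hn w rfl)
  · have hl := h.len t
    have hl2 := h.len (t ++ w)
    constructor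
    · intro _ u hu
      have := congrArg List.length hu
      rw [List.length_append, List.length_append] at this
      have : u = [] := List.length_eq_zero_iff.1 (by omega)
      simp [this]
    · intro _ u hu
      have := congrArg List.length hu
      rw [List.length_append, hl, hl2, List.length_append] at this
      have : u = [] := List.length_eq_zero_iff.1 (by omega)
      simp [this]

theorem PSpec.pos (h : PSpec F ρ) {s l : List (Fin k × α)} (hs : s ≠ []) (hsl : s <+: l)
    (hn : NR s l (s.getLast hs).1) :
    ρ l (s.getLast hs).1 = some ((s.getLast hs).2, ((F s).getLast (h.ne hs)).2) := by
  obtain ⟨w, rfl⟩ := hsl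
  have hn := hn w rfl
  clear * - hn
  induction w using List.reverseRecOn with
  | nil =>
    induction s using List.reverseRecOn with
    | nil => exact absurd rfl hs
    | append_singleton s m ih =>
      obtain ⟨b, hb, hb2⟩ := h.2.2 s m
      simp [hb, hb2]
  | append_singleton w m ih =>
    obtain ⟨b, hb, hb2⟩ := h.2.2 (s ++ w) m
    have h1 := hn m (by simp)
    rw [← List.append_assoc, hb2, Function.update_of_ne h1.symm]
    exact ih (fun m hm => hn m (by simp [hm]))

theorem PSpec.pos' (h : PSpec F ρ) {l : List (Fin k × α)} {p : Fin k} {g : α × β}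
    (hp : ρ l p = some g) :
    ∃ (s : List (Fin k × α)) (hs : s ≠ []), s <+: l ∧ s.getLast hs = (p, g.1) ∧
      ((F s).getLast (h.ne hs)).2 = g.2 ∧ NR s l p := by
  induction l using List.reverseRecOn with
  | nil => simp [h.2.1] at hp
  | append_singleton l m ih =>
    obtain ⟨b, hb, hb2⟩ := h.2.2 l m
    by_cases hpm : p = m.1
    · subst hpm
      simp [hb2] at hp
      subst hp
      refine ⟨l ++ [m], by simp, List.prefix_rfl, by simp, by simp [hb], ?_⟩
      intro w hw
      have : w = [] := by simpa using hw
      simp [this]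
    · rw [hb2, Function.update_of_ne hpm] at hp
      obtain ⟨s, hs, ⟨u, rfl⟩, h2, h3, h4⟩ := ih hp
      refine ⟨s, hs, ⟨u ++ [m], by simp⟩, h2, h3, ?_⟩
      intro w hw
      rw [List.append_assoc] at hw
      rw [← List.append_cancel_left hw]
      intro x hx
      rcases List.mem_append.1 hx with hx | hx
      · exact h4 u rfl x hx
      · rw [List.mem_singleton.1 hx]; exact fun e => hpm e.symm

theorem NR.mono {γ : Type} {s t l : List (Fin k × γ)} {p : Fin k} (h : NR s l p)
    (htl : t <+: l) : NR s t p := by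
  rintro w rfl m hm
  obtain ⟨u, rfl⟩ := htl
  exact h (w ++ u) (by simp) m (by simp [hm])

/-- The map on non-empty lists. -/
def PSpec.map (h : PSpec F ρ) (s : {l : List (Fin k × α) // l ≠ []}) :
    {l : List (Fin k × β) // l ≠ []} := ⟨F s.1, h.ne s.2⟩

theorem FP_coverA (A : Str V α) {s t : (FP V k A).carrier} :
    (FP V k A).Cover s t ↔ ∃ m, t.1 = s.1 ++ [m] := by
  constructor
  · rintro ⟨⟨w, hw⟩, h2, h3⟩
    match w, hw with
    | [], hw => exact absurd (Subtype.ext (by simpa using hw)) h2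
    | m :: w, hw =>
      refine ⟨m, ?_⟩
      rcases h3 ⟨s.1 ++ [m], by simp⟩ ⟨[m], rfl⟩ ⟨w, by simp [← hw]⟩ with h | h
      · have := congrArg (fun x => x.1.length) h
        simp at this
      · rw [← h]
  · rintro ⟨m, hm⟩
    refine ⟨⟨[m], hm.symm⟩, ?_, ?_⟩
    · rintro rfl
      simp at hm
    · rintro z ⟨u, hu⟩ hz
      have hz : z.1 <+: t.1 := hz
      rw [hm, List.prefix_concat_iff] at hz
      rcases hz with hz | hz
      · right; exact Subtype.ext (by rw [hz, hm])
      · left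
        have hz2 := hz.length_le
        rw [← hu] at hz2
        simp at hz2
        exact Subtype.ext (by rw [← hu, hz2, List.append_nil])

theorem FP_root (A : Str V α) {s : (FP V k A).carrier} :
    (FP V k A).IsRoot s ↔ s.1.length = 1 := by
  constructor
  · intro h
    obtain ⟨s, hs⟩ := s
    match s, hs with
    | [], hs => exact absurd rfl hs
    | m :: s, hs =>
      have := h ⟨[m], by simp⟩ ⟨s, rfl⟩
      have := congrArg (fun x => x.1.length) this
      simpa using this.symm
  · intro h y hy
    have hy : y.1 <+: s.1 := hy
    refine Subtype.ext (hy.eq_of_length_le ?_)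
    have := List.length_pos_iff.2 y.2
    omega

theorem path_mono_s4 {P Y : PObj V k} (hP : P.IsCoalg) {m : P.carrier → Y.carrier}
    (hm : PObj.IsHom P Y m) (hr : ∀ x, Y.le x x) (ht : ∀ x y z, Y.le x y → Y.le y z → Y.le x z)
    {x y : P.carrier} (hxy : P.le x y) (hfin : Finite P.carrier) : Y.le (m x) (m y) := by
  letI : PartialOrder P.carrier :=
    { le := P.le, le_refl := hP.1, le_trans := hP.2.1, le_antisymm := hP.2.2.1 }
  haveI := Fintype.ofFinite P.carrier
  letI : LocallyFiniteOrder P.carrier := by classical exact Fintype.toLocallyFiniteOrder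
  have h : Relation.ReflTransGen (· ⋖ ·) x y := le_iff_reflTransGen_covBy.1 hxy
  induction h with
  | refl => exact hr _
  | @tail b c h1 h2 ih =>
    refine ht _ _ _ (ih (le_iff_reflTransGen_covBy.2 h1)) ?_
    refine (hm.2.2.2.1 b c ⟨h2.le, h2.ne, ?_⟩).1
    intro z hz1 hz2
    rcases h2.eq_or_eq hz1 hz2 with h | h
    · exact Or.inl h
    · exact Or.inr h

theorem exists_max {n : ℕ} (hn : n ≠ 0) (v : Fin n → {l : List (Fin k × α) // l ≠ []})
    (hc : ∀ i j, (v i).1 <+: (v j).1 ∨ (v j).1 <+: (v i).1) :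
    ∃ i, ∀ j, (v j).1 <+: (v i).1 := by
  haveI : Nonempty (Fin n) := ⟨⟨0, Nat.pos_of_ne_zero hn⟩⟩
  obtain ⟨i, hi⟩ := Finite.exists_max (fun i => (v i).1.length)
  refine ⟨i, fun j => ?_⟩
  rcases hc j i with h | h
  · exact h
  · rw [h.eq_of_length_le (hi j)]

theorem FP_rel_iff (har : ∀ r : V.Rel, V.ar r ≠ 0) (A : Str V α) (B : Str V β)
    (h : PSpec F ρ) (hiso : ∀ l, PebblesIso A B (ρ l)) (r : V.Rel)
    (v : Fin (V.ar r) → {l : List (Fin k × α) // l ≠ []})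
    (hc : ∀ i j, (v i).1 <+: (v j).1 ∨ (v j).1 <+: (v i).1) :
    (FP V k A).rel r v ↔ (FP V k B).rel r fun i => h.map (v i) := by
  have hc' : ∀ i j, (h.map (v i)).1 <+: (h.map (v j)).1 ∨ (h.map (v j)).1 <+: (h.map (v i)).1 :=
    fun i j => (hc i j).imp h.pre h.pre
  have hnr : (∀ i j, NR (h.map (v i)).1 (h.map (v j)).1
      ((h.map (v i)).1.getLast (h.map (v i)).2).1) ↔
      ∀ i j, NR (v i).1 (v j).1 ((v i).1.getLast (v i).2).1 := by
    refine forall_congr' fun i => forall_congr' fun j => ?_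
    have := h.last (v i).2
    simp only [PSpec.map, this]
    exact h.nr (hc i j) _
  refine (and_iff_right hc).trans (Iff.trans ?_ (and_iff_right hc').symm)
  refine Iff.trans ?_ (and_congr_left' hnr).symm
  refine and_congr_right fun hn => ?_
  obtain ⟨i, hi⟩ := exists_max (har r) v hc
  exact (hiso (v i).1).2 r (fun t => ((v t).1.getLast (v t).2).1)
    (fun t => (((v t).1.getLast (v t).2).2, ((F (v t).1).getLast (h.ne (v t).2)).2))
    (fun t => h.pos (v t).2 (hi t) (hn t i))

theorem FP_ieq_iff (A : Str V α) (B : Str V β)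
    (h : PSpec F ρ) (hiso : ∀ l, PebblesIso A B (ρ l))
    (s t : {l : List (Fin k × α) // l ≠ []})
    (hc : s.1 <+: t.1 ∨ t.1 <+: s.1) :
    (FP V k A).ieq s t ↔ (FP V k B).ieq (h.map s) (h.map t) := by
  have hc' : (h.map s).1 <+: (h.map t).1 ∨ (h.map t).1 <+: (h.map s).1 := hc.imp h.pre h.pre
  have n1 : NR (h.map s).1 (h.map t).1 ((h.map s).1.getLast (h.map s).2).1 ↔
      NR s.1 t.1 (s.1.getLast s.2).1 := by
    have := h.last s.2
    simp only [PSpec.map, this]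
    exact h.nr hc _
  have n2 : NR (h.map t).1 (h.map s).1 ((h.map t).1.getLast (h.map t).2).1 ↔
      NR t.1 s.1 (t.1.getLast t.2).1 := by
    have := h.last t.2
    simp only [PSpec.map, this]
    exact h.nr hc.symm _
  refine (and_iff_right hc).trans (Iff.trans ?_ (and_iff_right hc').symm)
  refine Iff.trans ?_ (and_congr n1 (and_congr_left' n2)).symm
  refine and_congr_right fun hn1 => and_congr_right fun hn2 => ?_
  have nrr : ∀ (s : {l : List (Fin k × α) // l ≠ []}) p, NR s.1 s.1 p := by
    intro s p w hw
    have : w = [] := by simpa using hw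
    simp [this]
  rcases hc with hc | hc
  · exact (hiso t.1).1 _ _ _ _ _ _ (h.pos s.2 hc hn1) (h.pos t.2 List.prefix_rfl (nrr t _))
  · exact (hiso s.1).1 _ _ _ _ _ _ (h.pos s.2 List.prefix_rfl (nrr s _)) (h.pos t.2 hc hn2)

theorem pw_of_spec (har : ∀ r : V.Rel, V.ar r ≠ 0) (A : Str V α) (B : Str V β)
    (h : PSpec F ρ) (hiso : ∀ l, PebblesIso A B (ρ l)) :
    PObj.IsPWEmb (FP V k A) (FP V k B) h.map := by
  have hhom : PObj.IsHom (FP V k A) (FP V k B) h.map := by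
    refine ⟨fun r v hv => (FP_rel_iff har A B h hiso r v hv.1).1 hv,
      fun s t hst => (FP_ieq_iff A B h hiso s t hst.1).1 hst, ?_, ?_, fun s => h.last s.2⟩
    · intro s hs
      rw [FP_root] at hs
      refine (FP_root B).2 ?_
      exact (h.len s.1).trans hs
    · intro s t hst
      rw [FP_coverA] at hst
      refine (FP_coverA B).2 ?_
      obtain ⟨m, hm⟩ := hst
      obtain ⟨b, hb, _⟩ := h.2.2 s.1 m
      exact ⟨(m.1, b), by simp only [PSpec.map]; rw [hm, hb]⟩
  refine ⟨hhom, fun P hP hpath m hm => ?_⟩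
  have hmono : ∀ x y, P.le x y → (m x).1 <+: (m y).1 := fun x y hxy =>
    path_mono_s4 hP hm.1 (fun x => List.prefix_rfl) (fun x y z h1 h2 => List.IsPrefix.trans h1 h2)
      hxy hpath.1
  have hcomp : ∀ x y, (m x).1 <+: (m y).1 ∨ (m y).1 <+: (m x).1 := fun x y =>
    (hpath.2 x y).imp (hmono x y) (hmono y x)
  refine ⟨⟨fun r v hv => hhom.1 r _ (hm.1.1 r v hv), fun x y hxy => hhom.2.1 _ _ (hm.1.2.1 x y hxy),
    fun x hx => hhom.2.2.1 _ (hm.1.2.2.1 x hx), fun x y hx => hhom.2.2.2.1 _ _ (hm.1.2.2.2.1 x y hx),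
    fun x => (hhom.2.2.2.2 _).trans (hm.1.2.2.2.2 x)⟩, ?_, ?_, ?_⟩
  · intro x y hxy
    apply hm.2.1
    have hl : (m x).1.length = (m y).1.length := by
      rw [← h.len, ← h.len]
      exact congrArg (fun z => z.1.length) hxy
    refine Subtype.ext ?_
    rcases hcomp x y with h | h
    · exact h.eq_of_length hl
    · exact (h.eq_of_length hl.symm).symm
  · intro r v hv
    exact hm.2.2.1 r v ((FP_rel_iff har A B h hiso r (fun i => m (v i))
      (fun i j => hcomp _ _)).2 hv)
  · intro x y hxy
    exact hm.2.2.2 x y ((FP_ieq_iff A B h hiso _ _ (hcomp x y)).2 hxy)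

/-- The path of prefixes of a list. -/
def prefPath (A : Str V α) (l : List (Fin k × α)) : PObj V k where
  carrier := {s : {l : List (Fin k × α) // l ≠ []} // s.1 <+: l}
  rel r v := (FP V k A).rel r fun i => (v i).1
  ieq s t := (FP V k A).ieq s.1 t.1
  le s t := s.1.1 <+: t.1.1
  peb s := (FP V k A).peb s.1

theorem prefPath_fin (l : List (Fin k × α)) :
    Finite {s : {l : List (Fin k × α) // l ≠ []} // s.1 <+: l} := by
  have h : {x | x ∈ l.inits}.Finite := List.finite_toSet _
  haveI : Finite {x // x ∈ l.inits} := h.to_subtype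
  exact Finite.of_injective
    (fun s : {s : {l : List (Fin k × α) // l ≠ []} // s.1 <+: l} =>
      (⟨s.1.1, (List.mem_inits _ _).2 s.2⟩ : {x // x ∈ l.inits}))
    (fun s t hst => Subtype.ext (Subtype.ext (by simpa using hst)))

theorem prefPath_coalg (A : Str V α) (l : List (Fin k × α)) : (prefPath (V := V) A l).IsCoalg := by
  haveI : Finite (prefPath (V := V) A l).carrier := prefPath_fin l
  refine ⟨fun x => List.prefix_rfl, fun x y z h1 h2 => List.IsPrefix.trans h1 h2, ?_, ?_, ?_, ?_⟩
  · intro x y h1 h2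
    exact Subtype.ext (Subtype.ext (List.IsPrefix.eq_of_length_le h1 (List.IsPrefix.length_le h2)))
  · exact fun x => ⟨Set.toFinite _, fun y z h1 h2 => List.prefix_or_prefix_of_prefix h1 h2⟩
  · exact fun x y _ => List.prefix_or_prefix_of_prefix x.2 y.2
  · intro x y hadj hxy hne z hxz hxz' hzy
    have hn : NR x.1.1 y.1.1 (x.1.1.getLast x.1.2).1 := by
      rcases hadj.2 with ⟨r, v, hv, ⟨i, hi⟩, ⟨j, hj⟩⟩ | h | h
      · subst hi; subst hj
        exact hv.2.1 i j
      · exact h.2.1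
      · exact h.2.2.1
    obtain ⟨w, hw⟩ := hxz
    obtain ⟨u, hu⟩ := hzy
    have hw0 : w ≠ [] := by
      rintro rfl
      exact hxz' (Subtype.ext (Subtype.ext (by simpa using hw)))
    have hlast : z.1.1.getLast z.1.2 = w.getLast hw0 := by
      simp only [← hw]
      exact List.getLast_append_of_ne_nil _ hw0
    have := hn (w ++ u) (by rw [← hu, ← hw, List.append_assoc]) (w.getLast hw0)
      (List.mem_append_left _ (List.getLast_mem hw0))
    change (x.1.1.getLast x.1.2).1 ≠ (z.1.1.getLast z.1.2).1
    rw [hlast]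
    exact this.symm

theorem prefPath_emb (A : Str V α) (l : List (Fin k × α)) :
    PObj.IsEmb (prefPath (V := V) A l) (FP V k A) Subtype.val := by
  refine ⟨⟨fun r v h => h, fun x y h => h, ?_, ?_, fun x => rfl⟩, Subtype.val_injective,
    fun r v h => h, fun x y h => h⟩
  · intro x hx y hy
    exact congrArg Subtype.val (hx ⟨y, List.IsPrefix.trans hy x.2⟩ hy)
  · intro x y hxy
    refine ⟨hxy.1, fun h => hxy.2.1 (Subtype.ext h), fun z h1 h2 => ?_⟩
    exact (hxy.2.2 ⟨z, List.IsPrefix.trans h2 y.2⟩ h1 h2).imp (congrArg Subtype.val)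
      (congrArg Subtype.val)

theorem iso_of_pw (A : Str V α) (B : Str V β) (h : PSpec F ρ)
    (hpw : PObj.IsPWEmb (FP V k A) (FP V k B) h.map) (l : List (Fin k × α)) :
    PebblesIso A B (ρ l) := by
  have hemb := hpw.2 _ (prefPath_coalg A l)
    ⟨prefPath_fin l, fun x y => List.prefix_or_prefix_of_prefix x.2 y.2⟩ _ (prefPath_emb A l)
  constructor
  · intro p q x x' y y' hp hq
    obtain ⟨s, hs, hsl, hs1, hs2, hs3⟩ := h.pos' hp
    obtain ⟨t, ht, htl, ht1, ht2, ht3⟩ := h.pos' hq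
    have hc := List.prefix_or_prefix_of_prefix hsl htl
    have n1 : NR s t (s.getLast hs).1 := by rw [hs1]; exact hs3.mono htl
    have n2 : NR t s (t.getLast ht).1 := by rw [ht1]; exact ht3.mono hsl
    have n1' : NR (F s) (F t) ((F s).getLast (h.ne hs)).1 := by
      rw [h.last hs]; exact (h.nr hc _).2 n1
    have n2' : NR (F t) (F s) ((F t).getLast (h.ne ht)).1 := by
      rw [h.last ht]; exact (h.nr hc.symm _).2 n2
    have e1 : (FP V k A).ieq ⟨s, hs⟩ ⟨t, ht⟩ ↔ x = x' := by
      have : (FP V k A).ieq ⟨s, hs⟩ ⟨t, ht⟩ ↔ (s.getLast hs).2 = (t.getLast ht).2 :=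
        ⟨fun h => h.2.2.2, fun h => ⟨hc, n1, n2, h⟩⟩
      rw [this, hs1, ht1]
    have e2 : (FP V k B).ieq (h.map ⟨s, hs⟩) (h.map ⟨t, ht⟩) ↔ y = y' := by
      have : (FP V k B).ieq (h.map ⟨s, hs⟩) (h.map ⟨t, ht⟩) ↔
          ((F s).getLast (h.ne hs)).2 = ((F t).getLast (h.ne ht)).2 :=
        ⟨fun h => h.2.2.2, fun h' => ⟨hc.imp h.pre h.pre, n1', n2', h'⟩⟩
      rw [this, hs2, ht2]
    rw [← e1, ← e2]
    exact ⟨fun h' => hpw.1.2.1 _ _ h', fun h' => hemb.2.2.2 ⟨⟨s, hs⟩, hsl⟩ ⟨⟨t, ht⟩, htl⟩ h'⟩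
  · intro r v g hg
    choose s hs hsl hs1 hs2 hs3 using fun t => h.pos' (hg t)
    have hc : ∀ i j, s i <+: s j ∨ s j <+: s i := fun i j =>
      List.prefix_or_prefix_of_prefix (hsl i) (hsl j)
    have n1 : ∀ i j, NR (s i) (s j) ((s i).getLast (hs i)).1 := fun i j => by
      rw [hs1]; exact (hs3 i).mono (hsl j)
    have n1' : ∀ i j, NR (F (s i)) (F (s j)) ((F (s i)).getLast (h.ne (hs i))).1 := fun i j => by
      rw [h.last (hs i)]; exact (h.nr (hc i j) _).2 (n1 i j)
    have e1 : (FP V k A).rel r (fun i => ⟨s i, hs i⟩) ↔ A.rel r fun t => (g t).1 := by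
      have : (FP V k A).rel r (fun i => ⟨s i, hs i⟩) ↔
          A.rel r fun t => ((s t).getLast (hs t)).2 :=
        ⟨fun h => h.2.2, fun h => ⟨hc, n1, h⟩⟩
      rw [this]; simp only [hs1]
    have e2 : (FP V k B).rel r (fun i => h.map ⟨s i, hs i⟩) ↔ B.rel r fun t => (g t).2 := by
      have : (FP V k B).rel r (fun i => h.map ⟨s i, hs i⟩) ↔
          B.rel r fun t => ((F (s t)).getLast (h.ne (hs t))).2 :=
        ⟨fun h => h.2.2, fun h' => ⟨fun i j => (hc i j).imp h.pre h.pre, n1', h'⟩⟩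
      rw [this]; simp only [hs2]
    rw [← e1, ← e2]
    exact ⟨fun h' => hpw.1.1 r _ h', fun h' => hemb.2.2.1 r (fun i => ⟨⟨s i, hs i⟩, hsl i⟩) h'⟩

theorem spec_of_hom (A : Str V α) (B : Str V β) (f : (FP V k A).carrier → (FP V k B).carrier)
    (hf : PObj.IsHom (FP V k A) (FP V k B) f) :
    ∃ (F : List (Fin k × α) → List (Fin k × β)) (ρ : List (Fin k × α) → Fin k → Option (α × β))
      (h : PSpec F ρ), f = h.map := by
  classical
  let F : List (Fin k × α) → List (Fin k × β) := fun l => if h : l = [] then [] else (f ⟨l, h⟩).1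
  have hF0 : F [] = [] := by simp [F]
  have hF1 : ∀ s : (FP V k A).carrier, F s.1 = (f s).1 := fun s => by
    have := s.2
    simp only [F]
    rw [dif_neg this]
    rfl
  have hstep : ∀ l m, ∃ b, F (l ++ [m]) = F l ++ [(m.1, b)] := by
    intro l m
    have hm : l ++ [m] ≠ [] := by simp
    have e := hF1 ⟨l ++ [m], hm⟩
    have hpeb : ((f ⟨l ++ [m], hm⟩).1.getLast (f ⟨l ++ [m], hm⟩).2).1 = m.1 := by
      have := hf.2.2.2.2 ⟨l ++ [m], hm⟩
      refine Eq.trans this ?_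
      simp [FP]
    by_cases hl : l = []
    · subst hl
      have := hf.2.2.1 ⟨[] ++ [m], hm⟩ ((FP_root A).2 (by simp))
      rw [FP_root, List.length_eq_one_iff] at this
      obtain ⟨c, hc⟩ := this
      refine ⟨c.2, ?_⟩
      simp only [hc, List.getLast_singleton] at hpeb
      rw [hF0, e, hc, ← hpeb]; simp
    · have := hf.2.2.2.1 ⟨l, hl⟩ ⟨l ++ [m], hm⟩ ((FP_coverA A).2 ⟨m, rfl⟩)
      rw [FP_coverA] at this
      obtain ⟨c, hc⟩ := this
      refine ⟨c.2, ?_⟩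
      simp only [hc, List.getLast_append_singleton] at hpeb
      have e' := hF1 ⟨l, hl⟩
      simp only at e e'
      rw [e, hc, e', ← hpeb]
  have hlen : ∀ l, (F l).length = l.length := by
    intro l
    induction l using List.reverseRecOn with
    | nil => simp [hF0]
    | append_singleton l m ih =>
      obtain ⟨b, hb⟩ := hstep l m
      simp [hb, ih]
  let ρ : List (Fin k × α) → Fin k → Option (α × β) := fun l =>
    (l.zip (F l)).foldl (fun ρ m => Function.update ρ m.1.1 (some (m.1.2, m.2.2))) (fun _ => none)
  have hspec : PSpec F ρ := by
    refine ⟨hF0, by simp [ρ], fun l m => ?_⟩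
    obtain ⟨b, hb⟩ := hstep l m
    refine ⟨b, hb, ?_⟩
    simp only [ρ]
    rw [hb, List.zip_append (hlen l).symm]
    simp
  exact ⟨F, ρ, hspec, funext fun s => Subtype.ext (hF1 s).symm⟩

theorem spec_of_win (A : Str V α) (B : Str V β) (hw : EPebWin V A B k) :
    ∃ (F : List (Fin k × α) → List (Fin k × β)) (ρ : List (Fin k × α) → Fin k → Option (α × β)),
      PSpec F ρ ∧ ∀ l, PebblesIso A B (ρ l) := by
  obtain ⟨S, hS0, hS⟩ := hw
  choose c hc using fun (ρ : {ρ // S ρ}) => (hS ρ.1 ρ.2).2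
  let st : List (Fin k × α) → List (Fin k × β) × {ρ // S ρ} := fun l =>
    l.foldl (fun x m => (x.1 ++ [(m.1, c x.2 m.1 m.2)],
      ⟨Function.update x.2.1 m.1 (some (m.2, c x.2 m.1 m.2)), hc x.2 m.1 m.2⟩)) ([], ⟨_, hS0⟩)
  refine ⟨fun l => (st l).1, fun l => (st l).2.1, ⟨rfl, rfl, fun l m => ?_⟩,
    fun l => (hS _ (st l).2.2).1⟩
  exact ⟨c (st l).2 m.1 m.2, by simp [st], by simp [st]⟩

theorem win_of_spec (A : Str V α) (B : Str V β) (h : PSpec F ρ)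
    (hiso : ∀ l, PebblesIso A B (ρ l)) : EPebWin V A B k := by
  refine ⟨fun σ => ∃ l, ρ l = σ, ⟨[], h.2.1⟩, ?_⟩
  rintro _ ⟨l, rfl⟩
  refine ⟨hiso l, fun p a => ?_⟩
  obtain ⟨b, _, hb⟩ := h.2.2 l (p, a)
  exact ⟨b, l ++ [(p, a)], hb⟩

end Helpers

/-- there exists a pathwise embedding `F_k^I(A) → F_k^I(B)` in `EM(P_k^I)`
if, and only if, Duplicator has a winning strategy in the existential `k`-pebble game
from `A` to `B`. -/
theorem pathwise_embedding_iff_existential_pebble_game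
    (V : Vocab) [Finite V.Rel] (har : ∀ r : V.Rel, V.ar r ≠ 0)
    {α β : Type} (A : Str V α) (B : Str V β) (k : ℕ) (hk : 0 < k) :
    (∃ f, PObj.IsPWEmb (FP V k A) (FP V k B) f) ↔ EPebWin V A B k := by
  constructor
  · rintro ⟨f, hf⟩
    obtain ⟨F, ρ, h, rfl⟩ := spec_of_hom A B f hf.1
    exact win_of_spec A B h (iso_of_pw A B h hf)
  · intro hw
    obtain ⟨F, ρ, h, hiso⟩ := spec_of_win A B hw
    exact ⟨_, pw_of_spec har A B h hiso⟩
end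

section
/- For all σ-structures A and B and every positive integer k, A and B satisfy the same sentences of ∃L^k if, and only if, there exist pathwise embeddings F_k^I(A) → F_k^I(B) and F_k^I(B) → F_k^I(A) in EM(P_k^I). -/
abbrev NL (k : ℕ) (α : Type) := {l : List (Fin k × α) // l ≠ []}

namespace PEB

variable {V : Vocab} {k : ℕ} {α β : Type}

def env (l : List (Fin k × α)) : Fin k → Option α :=
  l.foldl (fun e m => Function.update e m.1 (some m.2)) (fun _ => none)

theorem env_nil : env ([] : List (Fin k × α)) = fun _ => none := rfl

theorem env_snoc (l : List (Fin k × α)) (m : Fin k × α) :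
    env (l ++ [m]) = Function.update (env l) m.1 (some m.2) := by
  simp [env, List.foldl_append]

theorem env_app (l w : List (Fin k × α)) (p : Fin k) (h : ∀ m ∈ w, m.1 ≠ p) :
    env (l ++ w) p = env l p := by
  induction w using List.reverseRecOn with
  | nil => simp
  | append_singleton w m ih =>
    rw [← List.append_assoc, env_snoc, Function.update_of_ne, ih]
    · intro m' hm'; exact h m' (by simp [hm'])
    · exact (h m (by simp)).symm

theorem env_last (t : NL k α) : env t.1 (t.1.getLast t.2).1 = some (t.1.getLast t.2).2 := by
  obtain ⟨t, ht⟩ := t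
  simp only
  conv_lhs => arg 1; rw [← List.dropLast_append_getLast ht]
  rw [env_snoc]; simp

/-- `t` is an active prefix of `s`. -/
def Act (t : NL k α) (s : List (Fin k × α)) : Prop :=
  ∃ w, s = t.1 ++ w ∧ ∀ m ∈ w, m.1 ≠ (t.1.getLast t.2).1

theorem Act.env {t : NL k α} {s : List (Fin k × α)} (h : Act t s) :
    env s (t.1.getLast t.2).1 = some (t.1.getLast t.2).2 := by
  obtain ⟨w, rfl, h⟩ := h
  rw [env_app _ _ _ h, env_last]

theorem exists_act (s : List (Fin k × α)) (p : Fin k) (a : α) (h : env s p = some a) :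
    ∃ t : NL k α, Act t s ∧ t.1.getLast t.2 = (p, a) := by
  induction s using List.reverseRecOn with
  | nil => simp [env_nil] at h
  | append_singleton s m ih =>
    rw [env_snoc] at h
    by_cases hp : p = m.1
    · subst hp
      simp at h
      subst h
      exact ⟨⟨s ++ [m], by simp⟩, ⟨[], by simp, by simp⟩, by simp⟩
    · rw [Function.update_of_ne hp] at h
      obtain ⟨t, ⟨w, rfl, hw⟩, ht⟩ := ih h
      refine ⟨t, ⟨w ++ [m], by simp, ?_⟩, ht⟩
      intro m' hm'
      rw [ht] at hw ⊢
      rcases List.mem_append.1 hm' with h1 | h1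
      · exact hw _ h1
      · simp at h1; subst h1; exact fun h => hp h.symm

theorem act_mid {t u : NL k α} {s : List (Fin k × α)} (h : Act t s) {w}
    (hu : u.1 = t.1 ++ w) (hus : u.1 <+: s) : ∀ m ∈ w, m.1 ≠ (t.1.getLast t.2).1 := by
  obtain ⟨x, rfl, hx⟩ := h
  obtain ⟨y, hy⟩ := hus
  rw [hu, List.append_assoc, List.append_cancel_left_eq] at hy
  subst hy
  intro m hm; exact hx m (by simp [hm])

theorem Act.prefix {t : NL k α} {s : List (Fin k × α)} (h : Act t s) : t.1 <+: s := by
  obtain ⟨w, rfl, _⟩ := h; exact ⟨w, rfl⟩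

theorem rel_of_act (A : Str V α) (r : V.Rel) (v : Fin (V.ar r) → NL k α) (s)
    (h : ∀ i, Act (v i) s) (hr : A.rel r fun i => ((v i).1.getLast (v i).2).2) :
    (FP V k A).rel r v :=
  ⟨fun i j => List.prefix_or_prefix_of_prefix (h i).prefix (h j).prefix,
    fun i _ _ hw => act_mid (h i) hw (h _).prefix, hr⟩

theorem exists_max (n : ℕ) (hn : n ≠ 0) (v : Fin n → NL k α)
    (hc : ∀ i j, (v i).1 <+: (v j).1 ∨ (v j).1 <+: (v i).1) :
    ∃ j, ∀ i, (v i).1 <+: (v j).1 := by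
  haveI : NeZero n := ⟨hn⟩
  obtain ⟨j, hj⟩ := Finite.exists_max (fun i => (v i).1.length)
  refine ⟨j, fun i => ?_⟩
  rcases hc i j with h | h
  · exact h
  · rw [h.eq_of_length (le_antisymm h.length_le (hj i))]

theorem ieq_iff (A : Str V α) (s t : NL k α) (h : s.1 <+: t.1) :
    (FP V k A).ieq s t ↔ Act s t.1 ∧ (s.1.getLast s.2).2 = (t.1.getLast t.2).2 := by
  constructor
  · rintro ⟨-, h1, -, h2⟩
    obtain ⟨w, hw⟩ := h
    exact ⟨⟨w, hw.symm, h1 w hw.symm⟩, h2⟩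
  · rintro ⟨h1, h2⟩
    refine ⟨Or.inl h, fun w hw => act_mid h1 hw (List.prefix_refl _), ?_, h2⟩
    intro w hw
    have : w = [] := by
      have := h.length_le
      rw [hw, List.length_append] at this
      exact List.length_eq_zero_iff.1 (by omega)
    simp [this]

theorem ieq_symm (A : Str V α) (s t : NL k α) (h : (FP V k A).ieq s t) : (FP V k A).ieq t s :=
  ⟨h.1.symm, h.2.2.1, h.2.1, h.2.2.2.symm⟩

theorem ieq_of_act (A : Str V α) (s t : NL k α) (l) (hs : Act s l) (ht : Act t l)
    (h : (s.1.getLast s.2).2 = (t.1.getLast t.2).2) : (FP V k A).ieq s t :=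
  ⟨List.prefix_or_prefix_of_prefix hs.prefix ht.prefix,
    fun _ hw => act_mid hs hw ht.prefix, fun _ hw => act_mid ht hw hs.prefix, h⟩

/-- strategies -/
structure Strat (F : List (Fin k × α) → List (Fin k × β)) : Prop where
  nil : F [] = []
  snoc : ∀ l p a, ∃ b, F (l ++ [(p, a)]) = F l ++ [(p, b)]

theorem Strat.app {F : List (Fin k × α) → List (Fin k × β)} (hF : Strat F) (t w) :
    ∃ w', F (t ++ w) = F t ++ w' ∧ w'.map Prod.fst = w.map Prod.fst := by
  induction w using List.reverseRecOn with
  | nil => exact ⟨[], by simp, rfl⟩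
  | append_singleton w m ih =>
    obtain ⟨w', h1, h2⟩ := ih
    obtain ⟨b, hb⟩ := hF.snoc (t ++ w) m.1 m.2
    refine ⟨w' ++ [(m.1, b)], ?_, by simp [h2]⟩
    rw [← List.append_assoc, ← List.append_assoc, ← h1, ← hb]

theorem Strat.map {F : List (Fin k × α) → List (Fin k × β)} (hF : Strat F) (t) :
    (F t).map Prod.fst = t.map Prod.fst := by
  obtain ⟨w, h1, h2⟩ := hF.app [] t
  rw [hF.nil] at h1
  simp at h1
  rw [h1, h2]

theorem Strat.length {F : List (Fin k × α) → List (Fin k × β)} (hF : Strat F) (t) :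
    (F t).length = t.length := by
  simpa using congrArg List.length (hF.map t)

theorem Strat.ne {F : List (Fin k × α) → List (Fin k × β)} (hF : Strat F) {t}
    (h : t ≠ []) : F t ≠ [] := by
  rw [← List.length_pos_iff, hF.length]; exact List.length_pos_iff.2 h

theorem Strat.mono {F : List (Fin k × α) → List (Fin k × β)} (hF : Strat F) {t s}
    (h : t <+: s) : F t <+: F s := by
  obtain ⟨w, rfl⟩ := h
  obtain ⟨w', h1, -⟩ := hF.app t w
  exact ⟨w', h1.symm⟩

theorem Strat.last {F : List (Fin k × α) → List (Fin k × β)} (hF : Strat F)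
    (t : NL k α) (u : NL k β) (h : u.1 = F t.1) :
    (u.1.getLast u.2).1 = (t.1.getLast t.2).1 := by
  obtain ⟨t, ht⟩ := t
  obtain ⟨u, hu⟩ := u
  simp only at h ⊢
  subst h
  have := hF.map t
  rw [← List.getLast_map (f := Prod.fst) (by simpa using hu),
    ← List.getLast_map (f := Prod.fst) (by simpa using ht)]
  simp only [this]

theorem Strat.act {F : List (Fin k × α) → List (Fin k × β)} (hF : Strat F)
    (t : NL k α) (u : NL k β) (h : u.1 = F t.1) {s} (hs : t.1 <+: s) :
    Act u (F s) ↔ Act t s := by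
  obtain ⟨w, rfl⟩ := hs
  obtain ⟨w', h1, h2⟩ := hF.app t.1 w
  have key : (∀ m ∈ w', m.1 ≠ (t.1.getLast t.2).1) ↔ (∀ m ∈ w, m.1 ≠ (t.1.getLast t.2).1) := by
    have e1 : (∀ m ∈ w', m.1 ≠ (t.1.getLast t.2).1) ↔
      ∀ q ∈ w'.map Prod.fst, q ≠ (t.1.getLast t.2).1 := by simp
    have e2 : (∀ m ∈ w, m.1 ≠ (t.1.getLast t.2).1) ↔
      ∀ q ∈ w.map Prod.fst, q ≠ (t.1.getLast t.2).1 := by simp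
    rw [e1, e2, h2]
  unfold Act
  rw [hF.last t u h, h1, h]
  simp only [List.append_cancel_left_eq]
  constructor
  · rintro ⟨x, rfl, hx⟩; exact ⟨w, rfl, key.1 hx⟩
  · rintro ⟨x, rfl, hx⟩; exact ⟨w', rfl, key.2 hx⟩

theorem isRoot_iff (A : Str V α) (s : NL k α) : (FP V k A).IsRoot s ↔ s.1.length = 1 := by
  obtain ⟨s, hs⟩ := s
  constructor
  · intro h
    cases s with
    | nil => exact absurd rfl hs
    | cons m l =>
      have := h ⟨[m], by simp⟩ ⟨l, rfl⟩
      have := congrArg Subtype.val this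
      simp at this
      simp [this]
  · rintro h ⟨t, ht⟩ (hp : t <+: s)
    refine Subtype.ext (hp.eq_of_length (le_antisymm hp.length_le ?_))
    have := List.length_pos_iff.2 ht
    simp only at h
    omega

theorem cover_iff (A : Str V α) (s t : NL k α) :
    (FP V k A).Cover s t ↔ ∃ m, t.1 = s.1 ++ [m] := by
  obtain ⟨s, hs⟩ := s
  obtain ⟨t, ht⟩ := t
  constructor
  · rintro ⟨⟨w, rfl : s ++ w = t⟩, h1, h2⟩
    cases w with
    | nil => exact absurd (Subtype.ext (List.append_nil s).symm) h1
    | cons m l =>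
      have := h2 ⟨s ++ [m], by simp⟩ ⟨[m], rfl⟩ ⟨l, by simp⟩
      rcases this with h | h
      · have := congrArg Subtype.val h
        simp at this
      · have := congrArg Subtype.val h
        simp at this
        exact ⟨m, by simp [this]⟩
  · rintro ⟨m, rfl : t = s ++ [m]⟩
    refine ⟨⟨[m], rfl⟩, ?_, ?_⟩
    · intro h
      have := congrArg Subtype.val h
      simp at this
    · rintro ⟨z, hz⟩ (h1 : s <+: z) (h2 : z <+: s ++ [m])
      rcases List.prefix_concat_iff.1 h2 with h | h
      · exact Or.inr (Subtype.ext h)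
      · exact Or.inl (Subtype.ext (h.eq_of_length (le_antisymm h.length_le h1.length_le)))

/-- The path of prefixes of `s`. -/
def pth (A : Str V α) (s : List (Fin k × α)) : PObj V k where
  carrier := {t : NL k α // t.1 <+: s}
  rel r v := (FP V k A).rel r fun i => (v i).1
  ieq x y := (FP V k A).ieq x.1 y.1
  le x y := x.1.1 <+: y.1.1
  peb x := (FP V k A).peb x.1

theorem pth_lin (A : Str V α) (s : List (Fin k × α)) (x y : (pth A s).carrier) :
    (pth A s).le x y ∨ (pth A s).le y x :=
  List.prefix_or_prefix_of_prefix x.2 y.2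

theorem pth_fin (A : Str V α) (s : List (Fin k × α)) : Finite (pth A s).carrier := by
  have : Finite {t // t ∈ s.inits} := (List.finite_toSet s.inits).to_subtype
  refine Finite.of_injective (β := {t // t ∈ s.inits})
    (fun x : (pth A s).carrier => ⟨x.1.1, (List.mem_inits _ _).2 x.2⟩) ?_
  intro x y h
  have := congrArg Subtype.val h
  exact Subtype.ext (Subtype.ext this)

theorem mem_suffix {x z y : NL k α} (hxz : x.1 <+: z.1) (hne : x ≠ z) (hzy : z.1 <+: y.1) :
    ∃ w, y.1 = x.1 ++ w ∧ z.1.getLast z.2 ∈ w := by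
  obtain ⟨a, ha⟩ := hxz
  obtain ⟨b, hb⟩ := hzy
  refine ⟨a ++ b, by rw [← hb, ← ha, List.append_assoc], ?_⟩
  have hane : a ≠ [] := by
    rintro rfl
    exact hne (Subtype.ext (by simpa using ha))
  refine List.mem_append_left _ ?_
  simp only [← ha]
  rw [List.getLast_append_of_ne_nil _ hane]
  exact List.getLast_mem _

theorem pth_coalg (A : Str V α) (s : List (Fin k × α)) : (pth A s).IsCoalg := by
  refine ⟨fun x => List.prefix_refl _, fun x y z h1 h2 => List.IsPrefix.trans h1 h2, ?_, ?_, ?_, ?_⟩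
  · intro x y (h1 : x.1.1 <+: y.1.1) (h2 : y.1.1 <+: x.1.1)
    exact Subtype.ext (Subtype.ext (h1.eq_of_length (le_antisymm h1.length_le h2.length_le)))
  · intro x
    haveI := pth_fin A s
    exact ⟨Set.toFinite _, fun y z _ _ => pth_lin A s y z⟩
  · intro x y _; exact pth_lin A s x y
  · intro x y hadj hxy hne z hxz hxz' hzy
    have hxz'' : x.1 ≠ z.1 := fun h => hxz' (Subtype.ext h)
    obtain ⟨w, hw, hm⟩ := mem_suffix hxz hxz'' hzy
    rcases hadj.2 with ⟨r, v, hr, ⟨i, rfl⟩, ⟨j, rfl⟩⟩ | h | h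
    · exact (hr.2.1 i j w hw _ hm).symm
    · exact (h.2.1 w hw _ hm).symm
    · exact (h.2.2.1 w hw _ hm).symm

theorem pth_emb (A : Str V α) (s : List (Fin k × α)) :
    PObj.IsEmb (pth A s) (FP V k A) Subtype.val := by
  refine ⟨⟨fun _ _ h => h, fun _ _ h => h, ?_, ?_, fun _ => rfl⟩, Subtype.val_injective,
    fun _ _ h => h, fun _ _ h => h⟩
  · intro x hx y (hy : y.1 <+: x.1.1)
    exact congrArg Subtype.val (hx ⟨y, hy.trans x.2⟩ hy)
  · rintro x y ⟨h1, h2, h3⟩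
    refine ⟨h1, fun h => h2 (Subtype.ext h), ?_⟩
    intro z (hz1 : x.1.1 <+: z.1) (hz2 : z.1 <+: y.1.1)
    rcases h3 ⟨z, hz2.trans y.2⟩ hz1 hz2 with h | h
    · exact Or.inl (congrArg Subtype.val h)
    · exact Or.inr (congrArg Subtype.val h)

open Classical in
theorem strat_of_hom (A : Str V α) (B : Str V β) (f : NL k α → NL k β)
    (hf : PObj.IsHom (FP V k A) (FP V k B) f) :
    ∃ F : List (Fin k × α) → List (Fin k × β), Strat F ∧ ∀ x : NL k α, (f x).1 = F x.1 := by
  refine ⟨fun l => if h : l = [] then [] else (f ⟨l, h⟩).1, ⟨by simp, ?_⟩, ?_⟩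
  · intro l p a
    have hne : l ++ [(p, a)] ≠ [] := by simp
    have hp : ((f ⟨l ++ [(p, a)], hne⟩).1.getLast (f ⟨l ++ [(p, a)], hne⟩).2).1 = p := by
      have := hf.2.2.2.2 ⟨l ++ [(p, a)], hne⟩
      simpa [FP] using this
    rw [dif_neg hne]
    by_cases hl : l = []
    · rw [dif_pos hl]
      have := (isRoot_iff B _).1 (hf.2.2.1 ⟨l ++ [(p, a)], hne⟩
        ((isRoot_iff A _).2 (by simp [hl])))
      obtain ⟨m, hm⟩ := List.length_eq_one_iff.1 this
      simp only [hm] at hp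
      refine ⟨m.2, ?_⟩
      rw [hm]; simp at hp; simp [← hp]
    · rw [dif_neg hl]
      obtain ⟨m, hm⟩ := (cover_iff B _ _).1 (hf.2.2.2.1 ⟨l, hl⟩ ⟨l ++ [(p, a)], hne⟩
        ((cover_iff A _ _).2 ⟨_, rfl⟩))
      simp only [hm] at hp
      refine ⟨m.2, ?_⟩
      rw [hm]; simp at hp; simp [← hp]
  · intro x; simp [x.2]

theorem sat_of_pw (A : Str V α) (B : Str V β) (f : NL k α → NL k β)
    (hf : PObj.IsPWEmb (FP V k A) (FP V k B) f)
    {F : List (Fin k × α) → List (Fin k × β)} (hF : Strat F)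
    (hfF : ∀ x : NL k α, (f x).1 = F x.1) (φ : LFml V k) :
    ∀ s, φ.Sat A (env s) → φ.Sat B (env (F s)) := by
  have hE := fun s => hf.2 (pth A s) (pth_coalg A s) ⟨pth_fin A s, pth_lin A s⟩ _ (pth_emb A s)
  have key : ∀ s p a, env s p = some a → ∃ t : NL k α, Act t s ∧ t.1.getLast t.2 = (p, a) ∧
      Act (f t) (F s) ∧ env (F s) p = some ((f t).1.getLast (f t).2).2 := by
    intro s p a h
    obtain ⟨t, h1, h2⟩ := exists_act s p a h
    have h3 := (hF.act t (f t) (hfF t) h1.prefix).2 h1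
    refine ⟨t, h1, h2, h3, ?_⟩
    rw [← h3.env, hF.last t (f t) (hfF t), h2]
  induction φ with
  | rel r v =>
    rintro s ⟨g, hg, hr⟩
    choose t h1 h2 h3 h4 using fun i => key s _ _ (hg i)
    refine ⟨_, h4, ?_⟩
    have := rel_of_act A r t s h1 (by simpa only [h2] using hr)
    exact (hf.1.1 r t this).2.2
  | nrel r v =>
    rintro s ⟨g, hg, hr⟩
    choose t h1 h2 h3 h4 using fun i => key s _ _ (hg i)
    refine ⟨_, h4, fun hB => hr ?_⟩
    have h5 := rel_of_act B r (fun i => f (t i)) (F s) h3 hB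
    have h6 := (hE s).2.2.1 r (fun i => ⟨t i, (h1 i).prefix⟩) h5
    have h7 : A.rel r fun i => ((t i).1.getLast (t i).2).2 := h6.2.2
    simpa only [h2] using h7
  | eq i j =>
    rintro s ⟨x, hi, hj⟩
    obtain ⟨t, h1, h2, h3, h4⟩ := key s _ _ hi
    obtain ⟨u, g1, g2, g3, g4⟩ := key s _ _ hj
    refine ⟨_, h4, ?_⟩
    rw [g4]
    have := hf.1.2.1 t u (ieq_of_act A t u s h1 g1 (by rw [h2, g2]))
    exact congrArg some this.2.2.2.symm
  | ne i j =>
    rintro s ⟨x, y, hi, hj, hxy⟩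
    obtain ⟨t, h1, h2, h3, h4⟩ := key s _ _ hi
    obtain ⟨u, g1, g2, g3, g4⟩ := key s _ _ hj
    refine ⟨_, _, h4, g4, fun h => hxy ?_⟩
    have := (hE s).2.2.2 ⟨t, h1.prefix⟩ ⟨u, g1.prefix⟩ (ieq_of_act B _ _ (F s) h3 g3 h)
    have h7 : (t.1.getLast t.2).2 = (u.1.getLast u.2).2 := this.2.2.2
    rw [h2, g2] at h7
    exact h7
  | iand ι g ih => intro s h x; exact ih x s (h x)
  | ior ι g ih => rintro s ⟨x, h⟩; exact ⟨x, ih x s h⟩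
  | ex i φ ih =>
    rintro s ⟨a, h⟩
    obtain ⟨b, hb⟩ := hF.snoc s i a
    have := ih (s ++ [(i, a)]) (by rw [env_snoc]; exact h)
    rw [hb, env_snoc] at this
    exact ⟨b, this⟩

/-- Preservation of existential formulas. -/
def T (A : Str V α) (B : Str V β) (e : Fin k → Option α) (e' : Fin k → Option β) : Prop :=
  ∀ φ : LFml V k, (∀ i ∈ φ.freeVars, e i ≠ none) → φ.Sat A e → φ.Sat B e'

theorem T.forth {A : Str V α} {B : Str V β} {e : Fin k → Option α} {e' : Fin k → Option β}
    (h : T A B e e') (p : Fin k) (a : α) :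
    ∃ b, T A B (Function.update e p (some a)) (Function.update e' p (some b)) := by
  by_contra hc
  simp only [T] at hc
  push Not at hc
  choose φ h1 h2 h3 using hc
  obtain ⟨b, hb⟩ := h (.ex p (.iand β φ)) (by
    rintro i ⟨hi, hip⟩
    obtain ⟨b, hb⟩ := Set.mem_iUnion.1 hi
    have := h1 b i hb
    rwa [Function.update_of_ne hip] at this) ⟨a, fun b => h2 b⟩
  exact h3 b (hb b)

noncomputable def G (A : Str V α) (B : Str V β)
    (h : T (k := k) A B (fun _ => none) (fun _ => none)) :
    (l : List (Fin k × α)) → {l' : List (Fin k × β) // T A B (env l.reverse) (env l')}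
  | [] => ⟨[], h⟩
  | m :: l =>
    let g := G A B h l
    ⟨g.1 ++ [(m.1, (g.2.forth m.1 m.2).choose)], by
      rw [List.reverse_cons, env_snoc, env_snoc]
      exact (g.2.forth m.1 m.2).choose_spec⟩

theorem exists_strat (A : Str V α) (B : Str V β)
    (h : T (k := k) A B (fun _ => none) (fun _ => none)) :
    ∃ F : List (Fin k × α) → List (Fin k × β), Strat F ∧ ∀ l, T A B (env l) (env (F l)) := by
  refine ⟨fun l => (G A B h l.reverse).1, ⟨rfl, ?_⟩, ?_⟩
  · intro l p a
    have e : (l ++ [(p, a)]).reverse = (p, a) :: l.reverse := by simp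
    change ∃ b, (G A B h (l ++ [(p, a)]).reverse).1 = (G A B h l.reverse).1 ++ [(p, b)]
    rw [e]
    exact ⟨_, rfl⟩
  · intro l
    have gen : ∀ l', l'.reverse = l → T A B (env l) (env (G A B h l').1) := by
      rintro l' rfl
      exact (G A B h l').2
    exact gen _ (List.reverse_reverse l)

theorem hom_le (A : Str V α) (P : PObj V k) (hP : P.IsCoalg) (hp : P.IsPath)
    (m : P.carrier → NL k α) (hm : PObj.IsHom P (FP V k A) m) (x y) (h : P.le x y) :
    (m x).1 <+: (m y).1 := by
  classical
  letI : PartialOrder P.carrier :=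
    { le := P.le, le_refl := hP.1, le_trans := hP.2.1, le_antisymm := hP.2.2.1 }
  haveI := hp.1
  letI := Fintype.ofFinite P.carrier
  letI : LocallyFiniteOrder P.carrier := Fintype.toLocallyFiniteOrder
  have h' : x ≤ y := h
  rw [le_iff_reflTransGen_covBy] at h'
  induction h' with
  | refl => exact List.prefix_refl _
  | tail h1 h2 ih =>
    rename_i b c
    refine (ih (le_iff_reflTransGen_covBy.2 h1)).trans ?_
    refine (hm.2.2.2.1 b c ⟨h2.le, h2.ne, ?_⟩).1
    intro z hz1 hz2
    have := h2.eq_or_eq (c := z) hz1 hz2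
    exact this

theorem hom_comp {X Y Z : PObj V k} {f : X.carrier → Y.carrier} {g : Y.carrier → Z.carrier}
    (hf : PObj.IsHom X Y f) (hg : PObj.IsHom Y Z g) : PObj.IsHom X Z (fun x => g (f x)) :=
  ⟨fun r v h => hg.1 r _ (hf.1 r v h), fun x y h => hg.2.1 _ _ (hf.2.1 x y h),
    fun x h => hg.2.2.1 _ (hf.2.2.1 x h), fun x y h => hg.2.2.2.1 _ _ (hf.2.2.2.1 x y h),
    fun x => (hg.2.2.2.2 _).trans (hf.2.2.2.2 x)⟩

theorem pw_of_T (har : ∀ r : V.Rel, V.ar r ≠ 0) (A : Str V α) (B : Str V β)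
    (h : T (k := k) A B (fun _ => none) (fun _ => none)) :
    ∃ f : NL k α → NL k β, PObj.IsPWEmb (FP V k A) (FP V k B) f := by
  obtain ⟨F, hF, hT⟩ := exists_strat A B h
  let f : NL k α → NL k β := fun x => ⟨F x.1, hF.ne x.2⟩
  have hfF : ∀ x, (f x).1 = F x.1 := fun _ => rfl
  have henv : ∀ (t : NL k α) s, Act t s →
      env (F s) (t.1.getLast t.2).1 = some ((f t).1.getLast (f t).2).2 := by
    intro t s hts
    have := ((hF.act t (f t) rfl hts.prefix).2 hts).env
    rwa [hF.last t (f t) rfl] at this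
  -- relations
  have hrel : ∀ r (v : Fin (V.ar r) → NL k α),
      (∀ i j, (v i).1 <+: (v j).1 ∨ (v j).1 <+: (v i).1) →
      ((FP V k A).rel r v ↔ (FP V k B).rel r fun i => f (v i)) := by
    intro r v hc
    obtain ⟨j, hj⟩ := exists_max _ (har r) v hc
    have hfv : ∀ i, Act (v i) (v j).1 ↔ Act (f (v i)) (F (v j).1) := fun i =>
      (hF.act (v i) (f (v i)) rfl (hj i)).symm
    constructor
    · intro hr
      have hact : ∀ i, Act (v i) (v j).1 := by
        intro i
        obtain ⟨w, hw⟩ := hj i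
        exact ⟨w, hw.symm, hr.2.1 i j w hw.symm⟩
      refine rel_of_act B r _ _ (fun i => (hfv i).1 (hact i)) ?_
      obtain ⟨g, hg, hB⟩ := hT (v j).1 (.rel r fun i => ((v i).1.getLast (v i).2).1) (by
        rintro _ ⟨i, rfl⟩
        simp [(hact i).env]) ⟨_, fun i => (hact i).env, hr.2.2⟩
      convert hB with i
      have := hg i
      rw [henv _ _ (hact i)] at this
      exact Option.some.inj this
    · intro hr
      have hact : ∀ i, Act (v i) (v j).1 := by
        intro i
        rw [hfv]
        obtain ⟨w, hw⟩ := hF.mono (hj i)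
        exact ⟨w, hw.symm, hr.2.1 i j w hw.symm⟩
      refine rel_of_act A r _ _ hact ?_
      by_contra hA
      obtain ⟨g, hg, hB⟩ := hT (v j).1 (.nrel r fun i => ((v i).1.getLast (v i).2).1) (by
        rintro _ ⟨i, rfl⟩
        simp [(hact i).env]) ⟨_, fun i => (hact i).env, hA⟩
      apply hB
      convert hr.2.2 with i
      have := hg i
      rw [henv _ _ (hact i)] at this
      exact (Option.some.inj this).symm
  have hieq1 : ∀ s t : NL k α, s.1 <+: t.1 →
      ((FP V k A).ieq s t ↔ (FP V k B).ieq (f s) (f t)) := by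
    intro s t hst
    rw [ieq_iff A s t hst, ieq_iff B (f s) (f t) (hF.mono hst)]
    have e := hF.act s (f s) rfl hst
    change _ ↔ Act (f s) (F t.1) ∧ _
    rw [e]
    refine and_congr_right fun hact => ?_
    have hactt : Act t t.1 := ⟨[], by simp, by simp⟩
    constructor
    · intro heq
      obtain ⟨x, hx, hy⟩ := hT t.1 (.eq (s.1.getLast s.2).1 (t.1.getLast t.2).1) (by
        rintro _ (rfl | rfl)
        · simp [hact.env]
        · simp [hactt.env]) ⟨_, hact.env, by rw [heq]; exact hactt.env⟩
      rw [henv _ _ hact] at hx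
      rw [henv _ _ hactt] at hy
      exact Option.some.inj (hx.trans hy.symm)
    · intro heq
      by_contra hne
      obtain ⟨x, y, hx, hy, hxy⟩ := hT t.1 (.ne (s.1.getLast s.2).1 (t.1.getLast t.2).1) (by
        rintro _ (rfl | rfl)
        · simp [hact.env]
        · simp [hactt.env]) ⟨_, _, hact.env, hactt.env, hne⟩
      rw [henv _ _ hact] at hx
      rw [henv _ _ hactt] at hy
      exact hxy ((Option.some.inj hx).symm.trans (heq.trans (Option.some.inj hy)))
  have hieq : ∀ s t : NL k α, (s.1 <+: t.1 ∨ t.1 <+: s.1) →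
      ((FP V k A).ieq s t ↔ (FP V k B).ieq (f s) (f t)) := by
    rintro s t (h | h)
    · exact hieq1 s t h
    · exact ⟨fun h' => ieq_symm _ _ _ ((hieq1 t s h).1 (ieq_symm _ _ _ h')),
        fun h' => ieq_symm _ _ _ ((hieq1 t s h).2 (ieq_symm _ _ _ h'))⟩
  have hhom : PObj.IsHom (FP V k A) (FP V k B) f := by
    refine ⟨fun r v hr => (hrel r v hr.1).1 hr, fun x y hx => (hieq x y hx.1).1 hx, ?_, ?_, ?_⟩
    · intro x hx
      have := (isRoot_iff A x).1 hx
      exact (isRoot_iff B (f x)).2 ((hF.length _).trans this)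
    · intro x y hxy
      obtain ⟨m, hm⟩ := (cover_iff A x y).1 hxy
      obtain ⟨b, hb⟩ := hF.snoc x.1 m.1 m.2
      refine (cover_iff B (f x) (f y)).2 ⟨(m.1, b), ?_⟩
      exact (congrArg F hm).trans hb
    · intro x
      exact hF.last x (f x) rfl
  refine ⟨f, hhom, ?_⟩
  intro P hP hp m hm
  have hcmp : ∀ x y, (m x).1 <+: (m y).1 ∨ (m y).1 <+: (m x).1 := fun x y =>
    (hp.2 x y).imp (hom_le A P hP hp m hm.1 x y) (hom_le A P hP hp m hm.1 y x)
  refine ⟨hom_comp hm.1 hhom, ?_, ?_, ?_⟩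
  · intro x y hxy
    apply hm.2.1
    have hl : (m x).1.length = (m y).1.length := by
      have h1 : F (m x).1 = F (m y).1 := congrArg Subtype.val hxy
      rw [← hF.length, ← hF.length (m y).1, h1]
    rcases hcmp x y with h | h
    · exact Subtype.ext (h.eq_of_length hl)
    · exact Subtype.ext (h.eq_of_length hl.symm).symm
  · intro r v hr
    exact hm.2.2.1 r v ((hrel r (fun i => m (v i)) (fun i j => hcmp _ _)).2 hr)
  · intro x y hxy
    exact hm.2.2.2 x y ((hieq (m x) (m y) (hcmp _ _)).2 hxy)

end PEB

/-- `A` and `B` satisfy the same sentences of `∃L^k` if, and only if, there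
exist pathwise embeddings `F_k^I(A) → F_k^I(B)` and `F_k^I(B) → F_k^I(A)` in
`EM(P_k^I)`. -/
theorem existential_Lk_equivalence_iff_pathwise_embeddings
    (V : Vocab) [Finite V.Rel] (har : ∀ r : V.Rel, V.ar r ≠ 0)
    {α β : Type} (A : Str V α) (B : Str V β) (k : ℕ) (hk : 0 < k) :
    (∀ φ : LFml V k, φ.freeVars = ∅ →
        (φ.Sat A (fun _ => none) ↔ φ.Sat B (fun _ => none))) ↔
      ((∃ f, PObj.IsPWEmb (FP V k A) (FP V k B) f) ∧
        (∃ g, PObj.IsPWEmb (FP V k B) (FP V k A) g)) := by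

  have tri : ∀ (φ : LFml V k) {γ : Type}, (∀ i ∈ φ.freeVars, (none : Option γ) ≠ none) →
      φ.freeVars = ∅ := by
    intro φ γ h
    exact Set.eq_empty_iff_forall_notMem.2 fun i hi => h i hi rfl
  constructor
  · intro h
    exact ⟨PEB.pw_of_T har A B fun φ hφ hs => (h φ (tri φ hφ)).1 hs,
      PEB.pw_of_T har B A fun φ hφ hs => (h φ (tri φ hφ)).2 hs⟩
  · rintro ⟨⟨f, hf⟩, ⟨g, hg⟩⟩ φ -
    obtain ⟨F, hF, hfF⟩ := PEB.strat_of_hom A B f hf.1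
    obtain ⟨G, hG, hgG⟩ := PEB.strat_of_hom B A g hg.1
    constructor
    · intro h
      have := PEB.sat_of_pw A B f hf hF hfF φ [] h
      rwa [hF.nil] at this
    · intro h
      have := PEB.sat_of_pw B A g hg hG hgG φ [] h
      rwa [hG.nil] at this
end

section
/- For all σ-structures A and B and every k ∈ ℕ, there exists a positive bisimulation from F_k^I(A) to F_k^I(B) in EM(E_k^I) if, and only if, Duplicator has a winning strategy in the positive k-round Ehrenfeucht–Fraïssé game from A to B. -/
/-- The relation formed by a list of pairs of chosen elements is a partial homomorphism
from `A` to `B`: it is functional and the corresponding map preserves the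
interpretations of all relation symbols. -/
def IsPartialHom {V : Vocab} {α β : Type} (A : Str V α) (B : Str V β)
    (h : List (α × β)) : Prop :=
  (∀ i j : Fin h.length, (h.get i).1 = (h.get j).1 → (h.get i).2 = (h.get j).2) ∧
  (∀ (r : V.Rel) (v : Fin (V.ar r) → Fin h.length),
    A.rel r (fun t => (h.get (v t)).1) → B.rel r fun t => (h.get (v t)).2)

/-- `PEFWin A B n h` : Duplicator has a winning strategy in the remaining `n` rounds of
the positive Ehrenfeucht–Fraïssé game from `A` to `B`, where `h` records the pairs of
elements chosen so far.  In each round Spoiler chooses an element of either structure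
and Duplicator responds with an element of the other structure; at the end the chosen
pairs must form a partial homomorphism from `A` to `B`. -/
def PEFWin {V : Vocab} {α β : Type} (A : Str V α) (B : Str V β) :
    ℕ → List (α × β) → Prop
  | 0, h => IsPartialHom A B h
  | n + 1, h => (∀ a : α, ∃ b : β, PEFWin A B n (h ++ [(a, b)])) ∧
      (∀ b : β, ∃ a : α, PEFWin A B n (h ++ [(a, b)]))
/-- A positive bisimulation from `X` to `Y` in `EM(E_k^I)`: a diagram
`X ⟵p Z₁ ⟶h Z₂ ⟶q Y` in which `p` and `q` are open pathwise embeddings and `h` is a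
bijective morphism. -/
def PosBisimE (V : Vocab) (k : ℕ) (X Y : EObj V) : Prop :=
  ∃ Z₁ Z₂ : EObj V, EObj.IsCoalg k Z₁ ∧ EObj.IsCoalg k Z₂ ∧
    ∃ (p : Z₁.carrier → X.carrier) (h : Z₁.carrier → Z₂.carrier)
      (q : Z₂.carrier → Y.carrier),
      EObj.IsPWEmb k Z₁ X p ∧ EObj.IsOpen k Z₁ X p ∧
      EObj.IsHom Z₁ Z₂ h ∧ Function.Bijective h ∧
      EObj.IsPWEmb k Z₂ Y q ∧ EObj.IsOpen k Z₂ Y q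
namespace EObj
variable {V : Vocab}

lemma last_of_eq {γ : Type} {l l' : List γ} {a : γ} (h : l ≠ []) (e : l = l' ++ [a]) :
    l.getLast h = a := by subst e; simp

lemma coalg_of_list {γ : Type} (k : ℕ) (X : EObj V) (e : X.carrier → List γ)
    (he : Function.Injective e) (hle : ∀ x y, X.le x y ↔ e x <+: e y)
    (hk : ∀ x, (e x).length ≤ k)
    (hadj : ∀ x y, X.Adj x y → e x <+: e y ∨ e y <+: e x) : IsCoalg k X := by
  refine ⟨fun x => (hle x x).2 (List.prefix_refl _),
    fun x y z h1 h2 => (hle _ _).2 (((hle _ _).1 h1).trans ((hle _ _).1 h2)),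
    fun x y h1 h2 => he (((hle _ _).1 h1).eq_of_length_le ((hle _ _).1 h2).length_le), ?_,
    fun x y h => by simpa only [hle] using hadj x y h⟩
  intro x
  have hinj : Set.InjOn (fun y => (e y).length) {y | X.le y x} := by
    intro y hy z hz hyz
    have hy' := (hle _ _).1 hy
    have hz' := (hle _ _).1 hz
    exact he ((List.prefix_of_prefix_length_le hy' hz' (le_of_eq hyz)).eq_of_length hyz)
  have hmaps : Set.MapsTo (fun y => (e y).length) {y | X.le y x} (Set.Iic k) :=
    fun y _ => hk y
  refine ⟨Set.Finite.of_injOn hmaps hinj (Set.finite_Iic k), ?_, ?_⟩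
  · have := Set.ncard_le_ncard_of_injOn _ hmaps hinj (Set.finite_Iic k)
    simpa [Set.ncard_eq_toFinset_card'] using this
  · intro y z hy hz
    simp only [hle] at *
    exact List.prefix_or_prefix_of_prefix hy hz

lemma FE_coalg (k : ℕ) {α : Type} (A : Str V α) : IsCoalg k (FE V k A) := by
  refine coalg_of_list k _ (fun x => x.1) Subtype.val_injective (fun _ _ => Iff.rfl)
    (fun x => x.2.2) ?_
  rintro x y ⟨-, ⟨r, v, hv, ⟨i, rfl⟩, ⟨j, rfl⟩⟩ | h | h⟩
  · exact hv.1 i j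
  · exact h.1
  · exact h.1.symm

lemma exists_pred {k : ℕ} {X : EObj V} (hX : IsCoalg k X) {x y : X.carrier}
    (h : X.le x y) (hne : x ≠ y) : ∃ w, X.le x w ∧ X.Cover w y := by
  obtain ⟨hr, ht, ha, hf, -⟩ := hX
  have hfin : {w | X.le x w ∧ X.le w y ∧ w ≠ y}.Finite :=
    (hf y).1.subset fun w hw => hw.2.1
  obtain ⟨w, hw, hmax⟩ := Set.exists_max_image _ (fun w => {u | X.le u w}.ncard) hfin
    ⟨x, hr x, h, hne⟩
  refine ⟨w, hw.1, hw.2.1, hw.2.2, fun z hwz hzy => ?_⟩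
  by_cases hzy' : z = y
  · exact Or.inr hzy'
  · left
    have h1 := hmax z ⟨ht _ _ _ hw.1 hwz, hzy, hzy'⟩
    have h2 : {u | X.le u w} = {u | X.le u z} :=
      Set.eq_of_subset_of_ncard_le (fun u hu => ht _ _ _ hu hwz) h1 (hf z).1
    have h3 : z ∈ {u | X.le u w} := by rw [h2]; exact hr z
    exact ha _ _ h3 hwz

lemma cover_unique {k : ℕ} {X : EObj V} (hX : IsCoalg k X) {x y z : X.carrier}
    (h1 : X.Cover x z) (h2 : X.Cover y z) : x = y := by
  rcases (hX.2.2.2.1 z).2.2 x y h1.1 h2.1 with h | h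
  · rcases h1.2.2 y h h2.1 with h | h
    · exact h.symm
    · exact absurd h h2.2.1
  · rcases h2.2.2 x h h1.1 with h | h
    · exact h
    · exact absurd h h1.2.1

lemma hom_mono {k : ℕ} {X Y : EObj V} (hX : IsCoalg k X) (hY : IsCoalg k Y)
    {f : X.carrier → Y.carrier} (hf : IsHom X Y f) :
    ∀ x y, X.le x y → Y.le (f x) (f y) := by
  intro x y
  induction hn : {u | X.le u y}.ncard using Nat.strong_induction_on generalizing y with
  | _ n ih =>
    intro hxy
    by_cases hne : x = y
    · subst hne; exact hY.1 _
    · obtain ⟨w, hxw, hw⟩ := exists_pred hX hxy hne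
      refine hY.2.1 _ _ _ (ih _ ?_ w rfl hxw) (hf.2.2.2 _ _ hw).1
      rw [← hn]
      refine Set.ncard_lt_ncard ⟨fun u hu => hX.2.1 _ _ _ hu hw.1, fun hs => ?_⟩
        (hX.2.2.2.1 y).1
      exact hw.2.1 (hX.2.2.1 _ _ hw.1 (hs (hX.1 y)))

/-- Induced substructure. -/
def sub (X : EObj V) (D : Set X.carrier) : EObj V where
  carrier := {x // x ∈ D}
  rel r v := X.rel r fun i => (v i).1
  ieq x y := X.ieq x.1 y.1
  le x y := X.le x.1 y.1

lemma sub_coalg {k : ℕ} {X : EObj V} (hX : IsCoalg k X) (D : Set X.carrier) :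
    IsCoalg k (X.sub D) := by
  refine ⟨fun x => hX.1 x.1, fun x y z => hX.2.1 _ _ _,
    fun x y h1 h2 => Subtype.ext (hX.2.2.1 _ _ h1 h2), fun x => ?_, ?_⟩
  · obtain ⟨h1, h2, h3⟩ := hX.2.2.2.1 x.1
    have hinj : Set.InjOn (fun y : {x // x ∈ D} => y.1) {y | X.le y.1 x.1} :=
      fun a _ b _ h => Subtype.ext h
    have hm : Set.MapsTo (fun y : {x // x ∈ D} => y.1) {y | X.le y.1 x.1} {y | X.le y x.1} :=
      fun a h => h
    exact ⟨Set.Finite.of_injOn hm hinj h1,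
      (Set.ncard_le_ncard_of_injOn _ hm hinj h1).trans h2, fun y z => h3 _ _⟩
  · rintro x y ⟨hne, h⟩
    refine hX.2.2.2.2 x.1 y.1 ⟨fun h => hne (Subtype.ext h), ?_⟩
    rcases h with ⟨r, v, hv, ⟨i, rfl⟩, ⟨j, rfl⟩⟩ | h
    · exact Or.inl ⟨r, _, hv, ⟨i, rfl⟩, ⟨j, rfl⟩⟩
    · exact Or.inr h

lemma sub_emb {X : EObj V} (D : Set X.carrier)
    (hD : ∀ x y, X.le x y → y ∈ D → x ∈ D) : IsEmb (X.sub D) X Subtype.val := by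
  refine ⟨⟨fun r v h => h, fun x y h => h, fun x hx y hy => ?_, ?_⟩, Subtype.val_injective,
    fun r v h => h, fun x y h => h⟩
  · exact congrArg Subtype.val (hx ⟨y, hD _ _ hy x.2⟩ hy)
  · rintro x y ⟨h1, h2, h3⟩
    refine ⟨h1, fun h => h2 (Subtype.ext h), fun z hz1 hz2 => ?_⟩
    rcases h3 ⟨z, hD _ _ hz2 y.2⟩ hz1 hz2 with h | h
    · exact Or.inl (congrArg Subtype.val h)
    · exact Or.inr (congrArg Subtype.val h)

lemma emb_cod {P X : EObj V} {g : P.carrier → X.carrier} (hg : IsEmb P X g)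
    (D : Set X.carrier) (h : ∀ x, g x ∈ D) : IsEmb P (X.sub D) (fun x => ⟨g x, h x⟩) := by
  obtain ⟨⟨h1, h2, h3, h4⟩, h5, h6, h7⟩ := hg
  refine ⟨⟨h1, h2, fun x hx y hy => Subtype.ext (h3 x hx y.1 hy), ?_⟩,
    fun x y hxy => h5 (congrArg Subtype.val hxy), h6, h7⟩
  intro x y hxy
  obtain ⟨a, b, c⟩ := h4 x y hxy
  refine ⟨a, fun h => b (congrArg Subtype.val h), fun z hz1 hz2 => ?_⟩
  rcases c z.1 hz1 hz2 with h | h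
  · exact Or.inl (Subtype.ext h)
  · exact Or.inr (Subtype.ext h)

/-- Elements below an optional element. -/
def Dn (X : EObj V) (o : Option X.carrier) : Set X.carrier := {y | ∃ z ∈ o, X.le y z}

/-- One-step extension. -/
def Sc (X : EObj V) (o : Option X.carrier) (z : X.carrier) : Prop :=
  match o with
  | none => X.IsRoot z
  | some y => X.Cover y z

lemma Dn_down {k : ℕ} {X : EObj V} (hX : IsCoalg k X) (o : Option X.carrier) :
    ∀ x y, X.le x y → y ∈ X.Dn o → x ∈ X.Dn o := by
  rintro x y h ⟨z, hz, hyz⟩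
  exact ⟨z, hz, hX.2.1 _ _ _ h hyz⟩

lemma Dn_path {k : ℕ} {X : EObj V} (hX : IsCoalg k X) (o : Option X.carrier) :
    IsPath (X.sub (X.Dn o)) := by
  constructor
  · refine Set.Finite.to_subtype ?_
    cases o with
    | none => simp [Dn]
    | some z => simpa [Dn] using (hX.2.2.2.1 z).1
  · rintro ⟨x, z, hz, hx⟩ ⟨y, z', hz', hy⟩
    obtain rfl := Option.mem_unique hz hz'
    exact (hX.2.2.2.1 z).2.2 x y hx hy

lemma Sc_hom {X Y : EObj V} {f : X.carrier → Y.carrier} (hf : IsHom X Y f)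
    {o : Option X.carrier} {z : X.carrier} (h : X.Sc o z) : Y.Sc (o.map f) (f z) := by
  cases o with
  | none => exact hf.2.2.1 _ h
  | some y => exact hf.2.2.2 _ _ h

lemma Sc_bij {k : ℕ} {X Y : EObj V} (hX : IsCoalg k X) (hY : IsCoalg k Y)
    {f : X.carrier → Y.carrier} (hf : IsHom X Y f) (hi : Function.Injective f)
    {o : Option X.carrier} {z : X.carrier} (h : Y.Sc (o.map f) (f z)) : X.Sc o z := by
  cases o with
  | none => exact fun y hy => hi (h _ (hom_mono hX hY hf _ _ hy))
  | some x =>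
    have h : Y.Cover (f x) (f z) := h
    by_cases hr : X.IsRoot z
    · exact absurd (hf.2.2.1 _ hr _ h.1) h.2.1
    · simp only [IsRoot, not_forall] at hr
      obtain ⟨y, hy, hne⟩ := hr
      obtain ⟨w, -, hw⟩ := exists_pred hX hy hne
      have := hi (cover_unique hY h (hf.2.2.2 _ _ hw))
      subst this
      exact hw

lemma Sc_le {k : ℕ} {X : EObj V} (hX : IsCoalg k X) {o : Option X.carrier} {z : X.carrier}
    (h : X.Sc o z) : X.Dn o ⊆ X.Dn (some z) := by
  rintro y ⟨w, hw, hy⟩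
  cases o with
  | none => simp at hw
  | some x =>
    obtain rfl : x = w := by simpa using hw
    exact ⟨z, rfl, hX.2.1 _ _ _ hy h.1⟩

/-- Underlying list. -/
def und {k : ℕ} {α : Type} {A : Str V α} (o : Option (FE V k A).carrier) : List α :=
  o.elim [] (fun x => x.1)

lemma FE_Sc {k : ℕ} {α : Type} {A : Str V α} (o : Option (FE V k A).carrier)
    (s : (FE V k A).carrier) : (FE V k A).Sc o s ↔ ∃ a, s.1 = und o ++ [a] := by
  obtain ⟨l, hl, hk⟩ := s
  constructor
  · intro h
    cases o with
    | none =>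
      obtain ⟨a, t, rfl⟩ := List.exists_cons_of_ne_nil hl
      have := h ⟨[a], by simp, by simp at hk ⊢; omega⟩ ⟨t, rfl⟩
      exact ⟨a, (congrArg Subtype.val this).symm⟩
    | some x =>
      obtain ⟨⟨t, ht⟩, hne, hc⟩ := h
      simp only at ht
      cases t with
      | nil => exact absurd (Subtype.ext (by simpa using ht)) hne
      | cons a t =>
        have hlen : (x.1 ++ [a]).length ≤ k := by
          rw [← ht] at hk; simp at hk ⊢; omega
        rcases hc ⟨x.1 ++ [a], by simp, hlen⟩ ⟨[a], rfl⟩ ⟨t, by simp [← ht]⟩ with h | h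
        · have := congrArg (fun y => y.1.length) h
          simp at this
        · exact ⟨a, (congrArg Subtype.val h).symm⟩
  · rintro ⟨a, ha⟩
    cases o with
    | none =>
      rintro ⟨y, hy, hyk⟩ hp
      simp only [und, Option.elim_none, List.nil_append] at ha
      subst ha
      refine Subtype.ext (List.IsPrefix.eq_of_length_le hp ?_)
      simpa [Nat.one_le_iff_ne_zero] using hy
    | some x =>
      simp only [und, Option.elim_some] at ha
      subst ha
      refine ⟨⟨[a], rfl⟩, fun h => ?_, ?_⟩
      · have := congrArg (fun y => y.1.length) h
        simp at this
      · rintro ⟨y, hy, hyk⟩ h1 h2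
        rcases List.prefix_concat_iff.1 h2 with h | h
        · exact Or.inr (Subtype.ext (by simpa using h))
        · exact Or.inl (Subtype.ext (h.eq_of_length_le h1.length_le))

lemma open_ext {k : ℕ} {α : Type} {A : Str V α} {Z : EObj V} (hZ : IsCoalg k Z)
    {f : Z.carrier → (FE V k A).carrier} (hf : IsPWEmb k Z (FE V k A) f)
    (ho : IsOpen k Z (FE V k A) f) (o : Option Z.carrier) (s : (FE V k A).carrier)
    (hs : (FE V k A).Sc (o.map f) s) : ∃ z, Z.Sc o z ∧ f z = s := by
  have hX := FE_coalg k A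
  have hmem : ∀ x : (Z.sub (Z.Dn o)).carrier, f x.1 ∈ (FE V k A).Dn (some s) := by
    rintro ⟨x, z, hz, hxz⟩
    refine ⟨s, rfl, ?_⟩
    cases o with
    | none => simp at hz
    | some y =>
      obtain rfl : y = z := by simpa using hz
      exact hX.2.1 _ _ _ (hom_mono hZ hX hf.1 _ _ hxz) hs.1
  have hemb := hf.2 _ (sub_coalg hZ _) (Dn_path hZ o) _ (sub_emb _ (Dn_down hZ o))
  have hsm : s ∈ (FE V k A).Dn (some s) := ⟨s, rfl, hX.1 s⟩
  obtain ⟨d, hd, hd1, hd2⟩ := ho (Z.sub (Z.Dn o)) ((FE V k A).sub ((FE V k A).Dn (some s)))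
    (sub_coalg hZ _) (Dn_path hZ o) (sub_coalg hX _) (Dn_path hX _)
    (fun x => ⟨f x.1, hmem x⟩) Subtype.val Subtype.val (emb_cod hemb _ hmem)
    (sub_emb _ (Dn_down hZ o)) (sub_emb _ (Dn_down hX _)) (fun _ => rfl)
  refine ⟨d ⟨s, hsm⟩, ?_, hd2 _⟩
  cases o with
  | none => exact hd.2.2.1 _ fun y hy => Subtype.ext (hs y.1 hy)
  | some y =>
    have hy : y ∈ Z.Dn (some y) := ⟨y, rfl, hZ.1 y⟩
    have h1 := hd1 ⟨y, hy⟩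
    have h2 := hd.2.2.2 ⟨f y, hmem ⟨y, hy⟩⟩ ⟨s, hsm⟩ ⟨hs.1,
      fun h => hs.2.1 (congrArg Subtype.val h), fun z hz1 hz2 => ?_⟩
    · rw [h1] at h2
      exact h2
    · rcases hs.2.2 z.1 hz1 hz2 with h | h
      · exact Or.inl (Subtype.ext h)
      · exact Or.inr (Subtype.ext h)

theorem forward {k : ℕ} {α β : Type} {A : Str V α} {B : Str V β}
    (H : PosBisimE V k (FE V k A) (FE V k B)) : PEFWin A B k [] := by
  obtain ⟨Z₁, Z₂, hZ₁, hZ₂, p, h, q, hp, hpo, hh, hb, hq, hqo⟩ := H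
  have hX := FE_coalg k A
  have hY := FE_coalg k B
  suffices key : ∀ (n : ℕ) (o : Option Z₁.carrier) (hist : List (α × β)),
      hist.length + n = k → und (o.map p) = hist.map Prod.fst →
      und ((o.map h).map q) = hist.map Prod.snd →
      (∀ c ∈ hist, ∃ z ∈ Z₁.Dn o, (∃ l, (p z).1 = l ++ [c.1]) ∧ ∃ l, (q (h z)).1 = l ++ [c.2]) →
      PEFWin A B n hist from key k none [] (by simp) rfl rfl (by simp)
  intro n
  induction n with
  | zero =>
    intro o hist hlen _ _ hc
    have hc' : ∀ i : Fin hist.length, ∃ z : (Z₁.sub (Z₁.Dn o)).carrier,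
        (∃ l, (p z.1).1 = l ++ [(hist.get i).1]) ∧ ∃ l, (q (h z.1)).1 = l ++ [(hist.get i).2] := by
      intro i
      obtain ⟨z, hz, h1⟩ := hc (hist.get i) (List.get_mem _ _)
      exact ⟨⟨z, hz⟩, h1⟩
    choose zz h1 h2 using hc'
    have g1 : ∀ i, (p (zz i).1).1.getLast (p (zz i).1).2.1 = (hist.get i).1 := fun i =>
      last_of_eq _ (h1 i).choose_spec
    have g2 : ∀ i, (q (h (zz i).1)).1.getLast (q (h (zz i).1)).2.1 = (hist.get i).2 := fun i =>
      last_of_eq _ (h2 i).choose_spec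
    have hemb := hp.2 _ (sub_coalg hZ₁ _) (Dn_path hZ₁ o) _ (sub_emb _ (Dn_down hZ₁ o))
    have hcmp : ∀ i j, (p (zz i).1).1 <+: (p (zz j).1).1 ∨ (p (zz j).1).1 <+: (p (zz i).1).1 := by
      intro i j
      rcases (Dn_path hZ₁ o).2 (zz i) (zz j) with h | h
      · exact Or.inl (hom_mono hZ₁ hX hp.1 _ _ h)
      · exact Or.inr (hom_mono hZ₁ hX hp.1 _ _ h)
    refine ⟨fun i j hij => ?_, fun r v hv => ?_⟩
    · have e1 : (FE V k A).ieq (p (zz i).1) (p (zz j).1) := ⟨hcmp i j, by rw [g1, g1, hij]⟩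
      have e2 : Z₁.ieq (zz i).1 (zz j).1 := hemb.2.2.2 _ _ e1
      have e3 := (hq.1.2.1 _ _ (hh.2.1 _ _ e2)).2
      rwa [g2, g2] at e3
    · have e1 : (FE V k A).rel r (fun t => p (zz (v t)).1) :=
        ⟨fun i j => hcmp _ _, by simpa only [g1] using hv⟩
      have e2 : Z₁.rel r (fun t => (zz (v t)).1) := hemb.2.2.1 r (fun t => zz (v t)) e1
      have e3 := (hq.1.1 _ _ (hh.1 _ _ e2)).2
      simpa only [g2] using e3
  | succ n ih =>
    intro o hist hlen hA hB hc
    have step : ∀ z a b, Z₁.Sc o z → (p z).1 = hist.map Prod.fst ++ [a] →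
        (q (h z)).1 = hist.map Prod.snd ++ [b] → PEFWin A B n (hist ++ [(a, b)]) := by
      intro z a b hz ha hb
      refine ih (some z) _ (by simp; omega) (by simpa [und] using ha) (by simpa [und] using hb) ?_
      intro c hcm
      rcases List.mem_append.1 hcm with hcm | hcm
      · obtain ⟨w, hw, h1⟩ := hc c hcm
        exact ⟨w, Sc_le hZ₁ hz hw, h1⟩
      · obtain rfl := List.mem_singleton.1 hcm
        exact ⟨z, ⟨z, rfl, hZ₁.1 z⟩, ⟨_, ha⟩, ⟨_, hb⟩⟩
    constructor
    · intro a
      obtain ⟨z, hz, hpz⟩ := open_ext hZ₁ hp hpo o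
        ⟨hist.map Prod.fst ++ [a], by simp, by simp; omega⟩
        ((FE_Sc _ _).2 ⟨a, by rw [hA]⟩)
      obtain ⟨b, hb'⟩ := (FE_Sc _ _).1 (Sc_hom hq.1 (Sc_hom hh hz))
      rw [hB] at hb'
      exact ⟨b, step z a b hz (by rw [hpz]) hb'⟩
    · intro b
      obtain ⟨w, hw, hqw⟩ := open_ext hZ₂ hq hqo (o.map h)
        ⟨hist.map Prod.snd ++ [b], by simp, by simp; omega⟩
        ((FE_Sc _ _).2 ⟨b, by rw [hB]⟩)
      obtain ⟨z, rfl⟩ := hb.2 w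
      have hz := Sc_bij hZ₁ hZ₂ hh hb.1 hw
      obtain ⟨a, ha⟩ := (FE_Sc _ _).1 (Sc_hom hp.1 hz)
      rw [hA] at ha
      exact ⟨a, step z a b hz ha (by rw [hqw])⟩

/-- The tree of winning plays. -/
def ZO (V : Vocab) (k : ℕ) {γ α : Type} (W : List γ → Prop) (π : γ → α) (A : Str V α) :
    EObj V where
  carrier := {l : List γ // l ≠ [] ∧ l.length ≤ k ∧ W l}
  rel r v :=
    (∀ i j, (v i).1 <+: (v j).1 ∨ (v j).1 <+: (v i).1) ∧
    A.rel r fun i => π ((v i).1.getLast (v i).2.1)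
  ieq s t := ((s.1 <+: t.1) ∨ (t.1 <+: s.1)) ∧
    π (s.1.getLast s.2.1) = π (t.1.getLast t.2.1)
  le s t := s.1 <+: t.1

section ZO
variable {k : ℕ} {γ α : Type} {W : List γ → Prop} {π : γ → α} {A : Str V α}

lemma ZO_coalg : IsCoalg k (ZO V k W π A) := by
  refine coalg_of_list k _ (fun x => x.1) Subtype.val_injective (fun _ _ => Iff.rfl)
    (fun x => x.2.2.1) ?_
  rintro x y ⟨-, ⟨r, v, hv, ⟨i, rfl⟩, ⟨j, rfl⟩⟩ | h | h⟩
  · exact hv.1 i j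
  · exact h.1
  · exact h.1.symm

/-- Projection. -/
def pj (V : Vocab) (k : ℕ) (W : List γ → Prop) (π : γ → α) (A : Str V α)
    (x : (ZO V k W π A).carrier) : (FE V k A).carrier :=
  ⟨x.1.map π, by simpa using x.2.1, by simpa using x.2.2.1⟩

lemma ZO_root (x : (ZO V k W π A).carrier) (hx : x.1.length = 1) :
    (ZO V k W π A).IsRoot x := by
  intro y hy
  refine Subtype.ext (List.IsPrefix.eq_of_length_le hy ?_)
  rw [hx]
  exact List.length_pos_of_ne_nil y.2.1

lemma ZO_cover (x y : (ZO V k W π A).carrier) (h : x.1 <+: y.1)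
    (hl : y.1.length = x.1.length + 1) : (ZO V k W π A).Cover x y := by
  refine ⟨h, fun e => by subst e; omega, fun z h1 h2 => ?_⟩
  have l1 := h1.length_le
  have l2 := h2.length_le
  rcases Nat.lt_or_ge x.1.length z.1.length with hlt | hge
  · exact Or.inr (Subtype.ext (h2.eq_of_length (by omega)))
  · exact Or.inl (Subtype.ext (h1.eq_of_length (by omega)).symm)

lemma FE_root_len (x : (FE V k A).carrier) (hx : (FE V k A).IsRoot x) : x.1.length = 1 := by
  obtain ⟨a, ha⟩ := (FE_Sc none x).1 hx
  rw [ha]; rfl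

lemma FE_cover_len (x y : (FE V k A).carrier) (hx : (FE V k A).Cover x y) :
    y.1.length = x.1.length + 1 := by
  obtain ⟨a, ha⟩ := (FE_Sc (some x) y).1 hx
  rw [ha]; simp [und]

lemma ZO_root_len (hW : ∀ l l', l <+: l' → W l' → W l)
    (x : (ZO V k W π A).carrier) (hx : (ZO V k W π A).IsRoot x) : x.1.length = 1 := by
  obtain ⟨l, hl, hk, hw⟩ := x
  obtain ⟨a, t, rfl⟩ := List.exists_cons_of_ne_nil hl
  have := hx ⟨[a], by simp, by simp at hk ⊢; omega, hW _ _ ⟨t, rfl⟩ hw⟩ ⟨t, rfl⟩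
  have := congrArg (fun y => y.1.length) this
  exact this.symm

lemma ZO_cover_len (hW : ∀ l l', l <+: l' → W l' → W l)
    (x y : (ZO V k W π A).carrier) (hx : (ZO V k W π A).Cover x y) :
    y.1.length = x.1.length + 1 := by
  obtain ⟨⟨t, ht⟩, hne, hc⟩ := hx
  cases t with
  | nil => exact absurd (Subtype.ext (by simpa using ht)) hne
  | cons a t =>
    have hpre : x.1 ++ [a] <+: y.1 := ⟨t, by simp [← ht]⟩
    rcases hc ⟨x.1 ++ [a], by simp, hpre.length_le.trans y.2.2.1, hW _ _ hpre y.2.2.2⟩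
      ⟨[a], rfl⟩ hpre with h | h
    · have := congrArg (fun y => y.1.length) h
      simp at this
    · have := congrArg (fun y => y.1.length) h
      simpa using this.symm

lemma pj_last (x : (ZO V k W π A).carrier) :
    (pj V k W π A x).1.getLast (pj V k W π A x).2.1 = π (x.1.getLast x.2.1) := by
  simp [pj]

lemma pj_hom (hW : ∀ l l', l <+: l' → W l' → W l) :
    IsHom (ZO V k W π A) (FE V k A) (pj V k W π A) := by
  refine ⟨fun r v hv => ⟨fun i j => ?_, ?_⟩, fun x y h => ⟨?_, ?_⟩, fun x hx => ?_,
    fun x y hxy => ?_⟩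
  · exact (hv.1 i j).imp (fun h => h.map π) (fun h => h.map π)
  · simpa only [pj_last] using hv.2
  · exact h.1.imp (fun h => h.map π) (fun h => h.map π)
  · simpa only [pj_last] using h.2
  · obtain ⟨c, hc⟩ := List.length_eq_one_iff.1 (ZO_root_len hW x hx)
    exact (FE_Sc none _).2 ⟨π c, by simp [pj, hc, und]⟩
  · have hl := ZO_cover_len hW x y hxy
    obtain ⟨t, ht⟩ := hxy.1
    have : t.length = 1 := by
      rw [← ht] at hl; simpa using hl
    obtain ⟨c, rfl⟩ := List.length_eq_one_iff.1 this
    exact (FE_Sc (some _) _).2 ⟨π c, by simp only [pj, ← ht, List.map_append]; rfl⟩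

lemma pj_pw (hW : ∀ l l', l <+: l' → W l' → W l) :
    IsPWEmb k (ZO V k W π A) (FE V k A) (pj V k W π A) := by
  refine ⟨pj_hom hW, fun P hP hPp m hm => ?_⟩
  have hph := pj_hom (V := V) (k := k) (π := π) (A := A) hW
  have hcmp : ∀ x y, (m x).1 <+: (m y).1 ∨ (m y).1 <+: (m x).1 := fun x y =>
    (hPp.2 x y).imp (hom_mono hP ZO_coalg hm.1 _ _) (hom_mono hP ZO_coalg hm.1 _ _)
  refine ⟨⟨fun r v h => hph.1 _ _ (hm.1.1 r v h), fun x y h => hph.2.1 _ _ (hm.1.2.1 _ _ h),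
    fun x h => hph.2.2.1 _ (hm.1.2.2.1 _ h), fun x y h => hph.2.2.2 _ _ (hm.1.2.2.2 _ _ h)⟩,
    fun x y hxy => ?_, fun r v h => ?_, fun x y h => ?_⟩
  · apply hm.2.1
    have hl : (m x).1.length = (m y).1.length := by
      have := congrArg (fun z => z.1.length) hxy
      simpa [pj] using this
    rcases hcmp x y with h | h
    · exact Subtype.ext (h.eq_of_length hl)
    · exact Subtype.ext (h.eq_of_length hl.symm).symm
  · apply hm.2.2.1
    refine ⟨fun i j => hcmp _ _, ?_⟩
    have := h.2
    simpa only [pj_last] using this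
  · apply hm.2.2.2
    refine ⟨hcmp _ _, ?_⟩
    have := h.2
    simpa only [pj_last] using this

lemma W_ext (hE : ∀ l, W l → l.length < k → ∀ a, ∃ c, π c = a ∧ W (l ++ [c])) :
    ∀ (t : List α) (l : List γ), W l → l.length + t.length ≤ k →
      ∃ l', W l' ∧ l <+: l' ∧ l'.map π = l.map π ++ t := by
  intro t
  induction t with
  | nil => exact fun l hl _ => ⟨l, hl, List.prefix_refl _, by simp⟩
  | cons a t ih =>
    intro l hl hk
    simp only [List.length_cons] at hk
    obtain ⟨c, rfl, hc⟩ := hE l hl (by omega) a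
    obtain ⟨l', h1, h2, h3⟩ := ih (l ++ [c]) hc (by simp; omega)
    exact ⟨l', h1, (List.prefix_append _ _).trans h2, by simp [h3]⟩

lemma path_top {P : EObj V} (hP : IsCoalg k P) (hp : IsPath P) (x : P.carrier) :
    ∃ t, ∀ y, P.le y t := by
  have := hp.1
  obtain ⟨t, -, ht⟩ := Set.exists_max_image Set.univ
    (fun w => {u | P.le u w}.ncard) Set.finite_univ ⟨x, trivial⟩
  refine ⟨t, fun y => (hp.2 y t).elim id fun h => ?_⟩
  have h2 : {u | P.le u t} = {u | P.le u y} :=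
    Set.eq_of_subset_of_ncard_le (fun u hu => hP.2.1 _ _ _ hu h) (ht y trivial)
      (hP.2.2.2.1 y).1
  have h3 : y ∈ {u | P.le u t} := by rw [h2]; exact hP.1 y
  exact h3

lemma pj_open (hW : ∀ l l', l <+: l' → W l' → W l) (h0 : W [])
    (hE : ∀ l, W l → l.length < k → ∀ a, ∃ c, π c = a ∧ W (l ++ [c])) :
    IsOpen k (ZO V k W π A) (FE V k A) (pj V k W π A) := by
  intro P Q hP hPp hQ hQp i m n hi hm hn hcomm
  by_cases hne : Nonempty Q.carrier
  swap
  · have hQe : IsEmpty Q.carrier := not_nonempty_iff.1 hne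
    refine ⟨fun q => (hne ⟨q⟩).elim, ⟨fun r v hv => ⟨fun i => (hne ⟨v i⟩).elim, ?_⟩,
      fun x => (hne ⟨x⟩).elim, fun x => (hne ⟨x⟩).elim, fun x => (hne ⟨x⟩).elim⟩,
      fun x => (hne ⟨i x⟩).elim, fun x => (hne ⟨x⟩).elim⟩
    have := (hn.1.1 r v hv).2
    convert this using 2 with j
    exact (hne ⟨v j⟩).elim
  obtain ⟨q0⟩ := hne
  obtain ⟨u, hu⟩ := path_top hQ hQp q0
  have hnu : ∀ q, (n q).1 <+: (n u).1 := fun q => hom_mono hQ (FE_coalg k A) hn.1 _ _ (hu q)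
  -- the play so far
  have hl : ∃ l, W l ∧ l.map π <+: (n u).1 ∧ ∀ x, (m x).1 <+: l := by
    by_cases hPe : Nonempty P.carrier
    · obtain ⟨x0⟩ := hPe
      obtain ⟨t, ht⟩ := path_top hP hPp x0
      refine ⟨(m t).1, (m t).2.2.2, ?_, fun x => hom_mono hP ZO_coalg hm.1 _ _ (ht x)⟩
      have := hnu (i t)
      rw [hcomm] at this
      exact this
    · exact ⟨[], h0, by simp, fun x => (hPe ⟨x⟩).elim⟩
  obtain ⟨l, hWl, ⟨t, ht⟩, hml⟩ := hl
  obtain ⟨l', hWl', hll, hmap⟩ := W_ext hE t l hWl (by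
    have := (n u).2.2
    rw [← ht] at this
    simpa using this)
  rw [ht] at hmap
  have hlen' : l'.length = (n u).1.length := by rw [← hmap]; simp
  have hlq : ∀ q, (l'.take (n q).1.length).length = (n q).1.length := by
    intro q
    have := (hnu q).length_le
    simp; omega
  have hd0 : ∀ q, l'.take (n q).1.length ≠ [] := by
    intro q h
    have h1 := hlq q
    rw [h] at h1
    exact (n q).2.1 (List.eq_nil_of_length_eq_zero h1.symm)
  let d : Q.carrier → (ZO V k W π A).carrier := fun q =>
    ⟨l'.take (n q).1.length, hd0 q, by rw [hlq]; exact (n q).2.2,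
      hW _ _ (List.take_prefix _ _) hWl'⟩
  have hd : ∀ q, pj V k W π A (d q) = n q := by
    intro q
    apply Subtype.ext
    simp only [pj, d, List.map_take, hmap]
    exact (List.prefix_iff_eq_take.1 (hnu q)).symm
  have hcmp : ∀ q q', (d q).1 <+: (d q').1 ∨ (d q').1 <+: (d q).1 := fun q q' =>
    List.prefix_or_prefix_of_prefix (List.take_prefix _ _) (List.take_prefix _ _)
  have hdl : ∀ q, (d q).1.length = (n q).1.length := hlq
  have hlast : ∀ q, π ((d q).1.getLast (d q).2.1) = (n q).1.getLast (n q).2.1 := by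
    intro q
    refine (pj_last (d q)).symm.trans ?_
    simp only [hd]
  refine ⟨d, ⟨fun r v hv => ⟨fun i j => hcmp _ _, ?_⟩, fun x y hxy => ⟨hcmp _ _, ?_⟩,
    fun x hx => ?_, fun x y hxy => ?_⟩, fun x => ?_, hd⟩
  · have := (hn.1.1 r v hv).2
    simpa only [hlast] using this
  · have := (hn.1.2.1 x y hxy).2
    simpa only [hlast] using this
  · exact ZO_root _ (by rw [hdl]; exact FE_root_len _ (hn.1.2.2.1 x hx))
  · have h1 := FE_cover_len _ _ (hn.1.2.2.2 x y hxy)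
    refine ZO_cover _ _ ?_ (by rw [hdl, hdl]; exact h1)
    exact List.prefix_of_prefix_length_le (List.take_prefix _ _) (List.take_prefix _ _)
      (by rw [hlq, hlq]; omega)
  · apply Subtype.ext
    have h1 : (n (i x)).1.length = (m x).1.length := by rw [hcomm]; simp [pj]
    show l'.take (n (i x)).1.length = (m x).1
    rw [h1]
    exact (List.prefix_iff_eq_take.1 ((hml x).trans hll)).symm

end ZO

lemma partialHom_prefix {α β : Type} {A : Str V α} {B : Str V β} {l t : List (α × β)}
    (h : IsPartialHom A B (l ++ t)) : IsPartialHom A B l := by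
  have hlt : l.length ≤ (l ++ t).length := by simp
  have e : ∀ i : Fin l.length, (l ++ t).get (Fin.castLE hlt i) = l.get i := by
    intro i; simp
  refine ⟨fun i j hij => ?_, fun r v hv => ?_⟩
  · have := h.1 (Fin.castLE hlt i) (Fin.castLE hlt j)
    rw [e, e] at this
    exact this hij
  · have := h.2 r (fun s => Fin.castLE hlt (v s))
    simp only [e] at this
    exact this hv

lemma win_hom {α β : Type} {A : Str V α} {B : Str V β} (a : α) :
    ∀ (n : ℕ) (l : List (α × β)), PEFWin A B n l → IsPartialHom A B l := by
  intro n
  induction n with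
  | zero => exact fun l h => h
  | succ n ih =>
    intro l h
    obtain ⟨b, hb⟩ := h.1 a
    exact partialHom_prefix (ih _ hb)

theorem backward {k : ℕ} {α β : Type} {A : Str V α} {B : Str V β}
    (har : ∀ r : V.Rel, V.ar r ≠ 0)
    (H : PEFWin A B k []) : PosBisimE V k (FE V k A) (FE V k B) := by
  let W : List (α × β) → Prop := fun l => ∀ l', l' <+: l → PEFWin A B (k - l'.length) l'
  have hW : ∀ l l', l <+: l' → W l' → W l := fun l l' h h' l'' h'' => h' l'' (h''.trans h)
  have h0 : W [] := by
    intro l' hl'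
    obtain rfl := List.prefix_nil.1 hl'
    exact H
  have hWs : ∀ l c, W l → PEFWin A B (k - (l.length + 1)) (l ++ [c]) → W (l ++ [c]) := by
    intro l c hl hc l' hl'
    rcases List.prefix_concat_iff.1 hl' with h | h
    · subst h; simpa using hc
    · exact hl _ h
  have hun : ∀ l, W l → l.length < k → PEFWin A B ((k - (l.length + 1)) + 1) l := by
    intro l hl hlt
    have := hl l (List.prefix_refl _)
    rwa [show k - l.length = (k - (l.length + 1)) + 1 by omega] at this
  have hE1 : ∀ l, W l → l.length < k → ∀ a, ∃ c : α × β, c.1 = a ∧ W (l ++ [c]) := by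
    intro l hl hlt a
    obtain ⟨b, hb⟩ := (hun l hl hlt).1 a
    exact ⟨(a, b), rfl, hWs _ _ hl hb⟩
  have hE2 : ∀ l, W l → l.length < k → ∀ b, ∃ c : α × β, c.2 = b ∧ W (l ++ [c]) := by
    intro l hl hlt b
    obtain ⟨a, hb⟩ := (hun l hl hlt).2 b
    exact ⟨(a, b), rfl, hWs _ _ hl hb⟩
  -- last elements as entries of a common extension
  have hidx : ∀ (l : List (α × β)) (x : List (α × β)) (hx : x ≠ []), x <+: l →
      ∃ i : Fin l.length, l.get i = x.getLast hx := by
    intro l x hx h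
    exact List.mem_iff_get.1 (h.subset (List.getLast_mem hx))
  have hph : ∀ l, l ≠ [] → W l → IsPartialHom A B l := fun l hl hw =>
    win_hom (l.head hl).1 _ l (hw l (List.prefix_refl _))
  refine ⟨ZO V k W Prod.fst A, ZO V k W Prod.snd B, ZO_coalg, ZO_coalg, pj V k W Prod.fst A,
    id, pj V k W Prod.snd B, pj_pw hW, pj_open hW h0 hE1,
    ⟨fun r v hv => ⟨hv.1, ?_⟩, fun x y hxy => ⟨hxy.1, ?_⟩, fun x hx => hx, fun x y h => h⟩,
    Function.bijective_id, pj_pw hW, pj_open hW h0 hE2⟩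
  · obtain ⟨hv1, hv2⟩ := hv
    have : Nonempty (Fin (V.ar r)) := ⟨⟨0, Nat.pos_of_ne_zero (har r)⟩⟩
    obtain ⟨m, hm⟩ := Finite.exists_max (fun i => (v i).1.length)
    have hpre : ∀ i, (v i).1 <+: (v m).1 := fun i => (hv1 i m).elim id fun h => by
      rw [h.eq_of_length_le (hm i)]
    choose f hf using fun i => hidx (v m).1 (v i).1 (v i).2.1 (hpre i)
    have := (hph (v m).1 (v m).2.1 (v m).2.2.2).2 r f
    simp only [hf] at this
    exact this hv2
  · obtain ⟨h1, h2⟩ := hxy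
    have : ∃ l : List (α × β), l ≠ [] ∧ W l ∧ x.1 <+: l ∧ y.1 <+: l := by
      rcases h1 with h | h
      · exact ⟨y.1, y.2.1, y.2.2.2, h, List.prefix_refl _⟩
      · exact ⟨x.1, x.2.1, x.2.2.2, List.prefix_refl _, h⟩
    obtain ⟨l, hl, hw, hx, hy⟩ := this
    obtain ⟨i, hi⟩ := hidx l x.1 x.2.1 hx
    obtain ⟨j, hj⟩ := hidx l y.1 y.2.1 hy
    have := (hph l hl hw).1 i j
    rw [hi, hj] at this
    exact this h2

end EObj

/-- there exists a positive bisimulation from `F_k^I(A)` to `F_k^I(B)` in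
`EM(E_k^I)` if, and only if, Duplicator has a winning strategy in the positive `k`-round
Ehrenfeucht–Fraïssé game from `A` to `B`. -/
theorem positive_bisimulation_iff_positive_EF_game
    (V : Vocab) [Finite V.Rel] (har : ∀ r : V.Rel, V.ar r ≠ 0)
    {α β : Type} (A : Str V α) (B : Str V β) (k : ℕ) :
    PosBisimE V k (FE V k A) (FE V k B) ↔ PEFWin A B k [] := by
  exact ⟨EObj.forward, EObj.backward har⟩
end
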